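/- arXiv:0901.3646 — 9 statements merged into one kernel-verified Lean document; each statement's English description precedes it below -/
import Mathlib

section
/- A C*-algebra A (over ℂ, not necessarily unital, with A ≠ {0}) has the fixed point property for nonexpansive mappings if and only if A is finite dimensional (as a complex vector space), and both are equivalent to the condition that the spectrum of every self-adjoint element of A is finite. -/
/-- A complex Banach space `B` has the *fixed point property for nonexpansive mappings*
if every nonexpansive self-map of every nonempty bounded closed convex subset of `B`
has a fixed point.  (Convexity is expressed with real coefficients coerced into `ℂ`.) -/
def HasFPP (B : Type*) [NormedAddCommGroup B] [NormedSpace ℂ B] : Prop :=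
  ∀ K : Set B, K.Nonempty → Bornology.IsBounded K → IsClosed K →
    (∀ x ∈ K, ∀ y ∈ K, ∀ t : ℝ, 0 ≤ t → t ≤ 1 →
      ((1 - t : ℝ) : ℂ) • x + ((t : ℝ) : ℂ) • y ∈ K) →
    ∀ M : B → B, Set.MapsTo M K K →
      (∀ x ∈ K, ∀ y ∈ K, ‖M x - M y‖ ≤ ‖x - y‖) →
      ∃ x ∈ K, M x = x

/-!
A nonexpansive self-map `f` of a bounded closed convex set has approximate fixed points, namely the
fixed points of the contractions `x ↦ t x₀ + (1 - t) f x`; in finite dimensions, compactness turns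
them into a fixed point.

A normal element `a` embeds `C(σ(a), ℂ)₀` isometrically into `A`. If `σ(a)` is infinite, it has an
accumulation point `l`; choose `0 ≤ η ≤ 1` vanishing exactly at `0` and `l`. On the part of the unit
ball vanishing at `l`, the nonexpansive map `f ↦ η + (1 - η) f` has no fixed point, since a fixed
point would be `1` near `l`.

If all self-adjoint elements have finite spectrum, then there is no infinite sequence of orthogonal
nonzero projections, so the projections satisfy both chain conditions. Maximality yields a unit,
which is a finite sum of minimal projections `eᵢ`, and each corner `eᵢ A eⱼ` is at most
one-dimensional.
-/

open Filter Topology Submodule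

section Nonexpansive

variable {E : Type*} [NormedAddCommGroup E] [NormedSpace ℝ E]

theorem exists_dist_lt_of_lipschitzOnWith_one {K : Set E} (hcomplete : IsComplete K)
    (hbdd : Bornology.IsBounded K) {x₀ : E} (hx₀ : x₀ ∈ K) (hstar : StarConvex ℝ x₀ K)
    {f : E → E} (hf : Set.MapsTo f K K) (hlip : LipschitzOnWith 1 f K) {ε : ℝ} (hε : 0 < ε) :
    ∃ x ∈ K, dist (f x) x < ε := by
  obtain ⟨t, ht0, ht1, hdiam⟩ : ∃ t : ℝ, 0 < t ∧ t < 1 ∧ t * Metric.diam K < ε := by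
    have hD : 0 ≤ Metric.diam K := Metric.diam_nonneg
    refine ⟨ε / (ε + Metric.diam K + 1), by positivity, ?_, ?_⟩
    · rw [div_lt_one (by positivity)]
      linarith
    · rw [div_mul_eq_mul_div, div_lt_iff₀ (by positivity)]
      nlinarith
  have hmaps : Set.MapsTo (fun x ↦ t • x₀ + (1 - t) • f x) K K := fun x hx ↦
    hstar (hf hx) ht0.le (sub_nonneg.2 ht1.le) (add_sub_cancel t 1)
  have hcontr : ContractingWith (1 - t).toNNReal (hmaps.restrict _ K K) := by
    refine ⟨by simpa using ht0, LipschitzWith.of_dist_le_mul fun x y ↦ ?_⟩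
    have hxy : dist (f x) (f y) ≤ dist (x : E) y := by simpa using hlip.dist_le_mul x x.2 y y.2
    simp only [Subtype.dist_eq, Set.MapsTo.val_restrict_apply, dist_add_left, dist_smul₀,
      Real.coe_toNNReal _ (sub_nonneg.2 ht1.le), Real.norm_of_nonneg (sub_nonneg.2 ht1.le)]
    exact mul_le_mul_of_nonneg_left hxy (sub_nonneg.2 ht1.le)
  obtain ⟨x, hx, hfix, -⟩ := hcontr.exists_fixedPoint' hcomplete hmaps hx₀ (edist_ne_top _ _)
  refine ⟨x, hx, ?_⟩
  calc dist (f x) x = dist (f x) (AffineMap.lineMap (f x) x₀ t) := by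
        rw [AffineMap.lineMap_apply_module, add_comm, show _ + _ = x from hfix]
    _ = t * dist (f x) x₀ := by rw [dist_left_lineMap, Real.norm_of_nonneg ht0.le]
    _ ≤ t * Metric.diam K := by gcongr; exact Metric.dist_le_diam_of_mem hbdd (hf hx) hx₀
    _ < ε := hdiam

theorem exists_fixedPoint_of_lipschitzOnWith_one {K : Set E} (hcompact : IsCompact K)
    {x₀ : E} (hx₀ : x₀ ∈ K) (hstar : StarConvex ℝ x₀ K)
    {f : E → E} (hf : Set.MapsTo f K K) (hlip : LipschitzOnWith 1 f K) :
    ∃ x ∈ K, f x = x := by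
  obtain ⟨x, hx, hmin⟩ := hcompact.exists_isMinOn ⟨x₀, hx₀⟩ (f := fun x ↦ dist (f x) x)
    (continuous_dist.comp_continuousOn (hlip.continuousOn.prodMk continuousOn_id))
  refine ⟨x, hx, dist_le_zero.1 (le_of_forall_pos_le_add fun ε hε ↦ ?_)⟩
  obtain ⟨y, hy, hlt⟩ := exists_dist_lt_of_lipschitzOnWith_one hcompact.isComplete
    hcompact.isBounded hx₀ hstar hf hlip hε
  rw [zero_add]
  exact (hmin hy).trans hlt.le

end Nonexpansive

section HasFPP

theorem hasFPP_iff_lipschitzOnWith_one {B : Type*} [NormedAddCommGroup B] [NormedSpace ℂ B] :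
    HasFPP B ↔ ∀ K : Set B, K.Nonempty → Bornology.IsBounded K → IsClosed K → Convex ℝ K →
      ∀ f : B → B, Set.MapsTo f K K → LipschitzOnWith 1 f K → ∃ x ∈ K, f x = x := by
  have convex_iff (K : Set B) : (∀ x ∈ K, ∀ y ∈ K, ∀ t : ℝ, 0 ≤ t → t ≤ 1 →
      ((1 - t : ℝ) : ℂ) • x + ((t : ℝ) : ℂ) • y ∈ K) ↔ Convex ℝ K := by
    simp only [Complex.coe_smul]
    refine ⟨fun h x hx y hy a b ha hb hab ↦ ?_, fun h x hx y hy t ht0 ht1 ↦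
      h hx hy (sub_nonneg.2 ht1) ht0 (sub_add_cancel 1 t)⟩
    obtain rfl : a = 1 - b := eq_sub_of_add_eq hab
    exact h x hx y hy b hb (sub_nonneg.1 ha)
  simp only [HasFPP, convex_iff, lipschitzOnWith_iff_dist_le_mul, NNReal.coe_one, one_mul,
    dist_eq_norm]

theorem hasFPP_of_finiteDimensional (B : Type*) [NormedAddCommGroup B] [NormedSpace ℂ B]
    [FiniteDimensional ℂ B] : HasFPP B := by
  rw [hasFPP_iff_lipschitzOnWith_one]
  rintro K ⟨x₀, hx₀⟩ hbdd hclosed hconv f hf hlip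
  have : ProperSpace B := FiniteDimensional.proper ℂ B
  exact exists_fixedPoint_of_lipschitzOnWith_one
    (Metric.isCompact_of_isClosed_isBounded hclosed hbdd) hx₀ (hconv hx₀) hf hlip

theorem HasFPP.of_linearIsometry {E F : Type*} [NormedAddCommGroup E] [NormedSpace ℂ E]
    [CompleteSpace E] [NormedAddCommGroup F] [NormedSpace ℂ F] (hF : HasFPP F) (e : E →ₗᵢ[ℂ] F) :
    HasFPP E := by
  rw [hasFPP_iff_lipschitzOnWith_one] at hF ⊢
  intro K hne hbdd hclosed hconv f hf hlip
  let g : F → F := Function.extend e (e ∘ f) id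
  have hg (x : E) : g (e x) = e (f x) := e.injective.extend_apply _ _ x
  obtain ⟨-, ⟨x, hx, rfl⟩, hfix⟩ := hF (e '' K) (hne.image e) (e.lipschitz.isBounded_image hbdd)
    (e.isometry.isClosedEmbedding.isClosedMap K hclosed)
    (hconv.linear_image (e.toLinearMap.restrictScalars ℝ)) g
    (by rintro - ⟨x, hx, rfl⟩; exact ⟨f x, hf hx, (hg x).symm⟩)
    (by
      rintro - ⟨x, hx, rfl⟩ - ⟨y, hy, rfl⟩
      rw [hg, hg, e.isometry.edist_eq, e.isometry.edist_eq]
      exact hlip hx hy)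
  exact ⟨x, hx, e.injective ((hg x).symm.trans hfix)⟩

end HasFPP

section ContinuousFunctions

open scoped ContinuousMapZero

variable {X : Type*} [TopologicalSpace X] [Zero X]

theorem continuousMapZero_norm_le_iff [CompactSpace X] {R : Type*} [NormedAddCommGroup R]
    {f : C(X, R)₀} {r : ℝ} (hr : 0 ≤ r) : ‖f‖ ≤ r ↔ ∀ x, ‖f x‖ ≤ r :=
  ContinuousMap.norm_le (f : C(X, R)) hr

variable {𝕜 : Type*} [RCLike 𝕜] {η : C(X, ℝ)₀}

/-- The map `f ↦ η + (1 - η) f`, which for `0 ≤ η ≤ 1` moves each value `f x` towards `1` by the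
proportion `η x`. -/
def moveTowardOne (η : C(X, ℝ)₀) (f : C(X, 𝕜)₀) : C(X, 𝕜)₀ :=
  ⟨⟨fun x ↦ η x + (1 - η x : ℝ) * f x, by fun_prop⟩, by simp⟩

theorem moveTowardOne_apply (η : C(X, ℝ)₀) (f : C(X, 𝕜)₀) (x : X) :
    moveTowardOne η f x = η x + (1 - η x : ℝ) * f x := rfl

theorem lipschitzWith_one_moveTowardOne [CompactSpace X] (hη0 : ∀ x, 0 ≤ η x)
    (hη1 : ∀ x, η x ≤ 1) : LipschitzWith 1 (moveTowardOne η : C(X, 𝕜)₀ → C(X, 𝕜)₀) := by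
  refine LipschitzWith.mk_one fun f g ↦ ?_
  rw [dist_eq_norm, dist_eq_norm, continuousMapZero_norm_le_iff (norm_nonneg _)]
  intro x
  calc ‖(moveTowardOne η f - moveTowardOne η g) x‖ = (1 - η x) * ‖(f - g) x‖ := by
        rw [ContinuousMapZero.coe_sub, ContinuousMapZero.coe_sub, Pi.sub_apply, Pi.sub_apply,
          moveTowardOne_apply, moveTowardOne_apply, add_sub_add_left_eq_sub, ← mul_sub, norm_mul,
          RCLike.norm_of_nonneg (sub_nonneg.2 (hη1 x))]
    _ ≤ ‖(f - g) x‖ := mul_le_of_le_one_left (norm_nonneg _) (sub_le_self 1 (hη0 x))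
    _ ≤ ‖f - g‖ := (continuousMapZero_norm_le_iff (norm_nonneg _)).1 le_rfl x

theorem norm_moveTowardOne_le_one [CompactSpace X] (hη0 : ∀ x, 0 ≤ η x) (hη1 : ∀ x, η x ≤ 1)
    {f : C(X, 𝕜)₀} (hf : ‖f‖ ≤ 1) : ‖moveTowardOne η f‖ ≤ 1 := by
  rw [continuousMapZero_norm_le_iff zero_le_one] at hf ⊢
  intro x
  calc ‖moveTowardOne η f x‖ ≤ η x + (1 - η x) * ‖f x‖ := by
        refine (norm_add_le _ _).trans_eq ?_
        rw [norm_mul, RCLike.norm_of_nonneg (hη0 x), RCLike.norm_of_nonneg (sub_nonneg.2 (hη1 x))]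
    _ ≤ η x + (1 - η x) * 1 := by
        gcongr
        exacts [sub_nonneg.2 (hη1 x), hf x]
    _ = 1 := by ring

theorem eq_one_of_moveTowardOne_eq_self {f : C(X, 𝕜)₀} (hf : moveTowardOne η f = f) {x : X}
    (hx : η x ≠ 0) : f x = 1 := by
  have hfx : (η x : 𝕜) + (1 - η x : ℝ) * f x = f x := DFunLike.congr_fun hf x
  push_cast at hfx
  refine mul_left_cancel₀ (RCLike.ofReal_ne_zero.2 hx : (η x : 𝕜) ≠ 0) ?_
  linear_combination -hfx

theorem HasFPP.exists_continuousMapZero_eq_one [CompactSpace X] (hX : HasFPP C(X, ℂ)₀)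
    (hη0 : ∀ x, 0 ≤ η x) (hη1 : ∀ x, η x ≤ 1) {l : X} (hl : η l = 0) :
    ∃ f : C(X, ℂ)₀, f l = 0 ∧ ∀ x, η x ≠ 0 → f x = 1 := by
  rw [hasFPP_iff_lipschitzOnWith_one] at hX
  let ev : C(X, ℂ)₀ →L[ℂ] ℂ := ContinuousMapZero.evalCLM ℂ l
  obtain ⟨f, ⟨-, hfl⟩, hfix⟩ := hX (Metric.closedBall 0 1 ∩ {f | f l = 0})
    ⟨0, Metric.mem_closedBall_self zero_le_one, rfl⟩
    (Metric.isBounded_closedBall.subset Set.inter_subset_left)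
    (Metric.isClosed_closedBall.inter (isClosed_eq ev.continuous continuous_const))
    ((convex_closedBall 0 1).inter (ev.toLinearMap.ker.restrictScalars ℝ).convex)
    (moveTowardOne η)
    (fun f ⟨hf, hfl⟩ ↦ ⟨mem_closedBall_zero_iff.2
      (norm_moveTowardOne_le_one hη0 hη1 (mem_closedBall_zero_iff.1 hf)),
      by simp [moveTowardOne_apply, hl, show f l = 0 from hfl]⟩)
    (lipschitzWith_one_moveTowardOne hη0 hη1).lipschitzOnWith
  exact ⟨f, hfl, fun x ↦ eq_one_of_moveTowardOne_eq_self hfix⟩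

theorem HasFPP.finite_of_continuousMapZero {X : Type*} [MetricSpace X] [CompactSpace X] [Zero X]
    (hX : HasFPP C(X, ℂ)₀) : Finite X := by
  by_contra hinf
  rw [not_finite_iff_infinite] at hinf
  obtain ⟨l, hl⟩ := exists_nhds_ne_neBot X
  let η : C(X, ℝ)₀ := ⟨⟨fun x ↦ min 1 (dist x 0 * dist x l), by fun_prop⟩, by simp⟩
  have η_apply (x : X) : η x = min 1 (dist x 0 * dist x l) := rfl
  obtain ⟨f, hfl, hf⟩ := hX.exists_continuousMapZero_eq_one (η := η) (l := l)
    (fun x ↦ by rw [η_apply]; positivity) (fun x ↦ min_le_left _ _) (by simp [η_apply])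
  have hne_zero : ∀ᶠ x in 𝓝[≠] l, x ≠ 0 := by
    rcases eq_or_ne l 0 with rfl | hl0
    · exact self_mem_nhdsWithin
    · exact nhdsWithin_le_nhds (isOpen_ne.mem_nhds hl0)
  have heq_one : ∀ᶠ x in 𝓝[≠] l, f x = 1 := by
    filter_upwards [hne_zero, self_mem_nhdsWithin] with x hx0 hxl
    refine hf x (lt_min one_pos ?_).ne'
    exact mul_pos (dist_pos.2 hx0) (dist_pos.2 hxl)
  have hlim : Tendsto f (𝓝[≠] l) (𝓝 0) :=
    hfl ▸ ((map_continuous f).tendsto l).mono_left nhdsWithin_le_nhds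
  exact zero_ne_one (tendsto_nhds_unique hlim (tendsto_const_nhds.congr' (heq_one.mono
    fun _ ↦ Eq.symm)))

theorem HasFPP.finite_quasispectrum {A : Type*} [NonUnitalCStarAlgebra A] (hA : HasFPP A) (a : A)
    [IsStarNormal a] : (quasispectrum ℂ a).Finite := by
  let Φ : C(quasispectrum ℂ a, ℂ)₀ →ₗᵢ[ℂ] A :=
    { toLinearMap := (cfcₙHom (R := ℂ) (p := IsStarNormal) (a := a) ‹_› : _ →ₗ[ℂ] A)
      norm_map' := fun f ↦ norm_cfcₙHom a f }
  exact Set.finite_coe_iff.1 (hA.of_linearIsometry Φ).finite_of_continuousMapZero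

end ContinuousFunctions

theorem mem_quasispectrum_of_mul_eq_smul {𝕜 A : Type*} [Field 𝕜] [NonUnitalRing A] [Module 𝕜 A]
    [IsScalarTower 𝕜 A A] [SMulCommClass 𝕜 A A] {a p : A} {r : 𝕜} (hp : p ≠ 0)
    (h : a * p = r • p) : r ∈ quasispectrum 𝕜 a := by
  rw [Unitization.quasispectrum_eq_spectrum_inr, spectrum.mem_iff]
  intro hu
  refine hp (Unitization.inr_injective (R := 𝕜) (hu.mul_left_cancel ?_))
  rw [Unitization.inr_zero, mul_zero, sub_mul, ← Unitization.inr_mul, h,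
    Algebra.algebraMap_eq_smul_one, smul_mul_assoc, one_mul, Unitization.inr_smul, sub_self]

theorem isStarProjection_mul_eq_zero_comm {R : Type*} [NonUnitalNonAssocSemiring R] [StarRing R]
    {p q : R} (hp : IsStarProjection p) (hq : IsStarProjection q) : p * q = 0 ↔ q * p = 0 := by
  rw [← star_eq_zero, star_mul, hp.isSelfAdjoint.star_eq, hq.isSelfAdjoint.star_eq]

theorem pairwise_mul_eq_zero_of_lt {R ι : Type*} [NonUnitalNonAssocSemiring R] [StarRing R]
    [LinearOrder ι] {p : ι → R} (hp : ∀ i, IsStarProjection (p i))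
    (h : ∀ i j, i < j → p i * p j = 0) : Pairwise fun i j ↦ p i * p j = 0 := by
  intro i j hij
  rcases hij.lt_or_gt with hlt | hlt
  · exact h i j hlt
  · exact (isStarProjection_mul_eq_zero_comm (hp j) (hp i)).1 (h j i hlt)

/-- A minimal projection of a C*-algebra: minimal, for the order of the algebra, among the nonzero
projections. Sums of these decompose the unit. -/
def IsMinimalProjection {A : Type*} [Mul A] [Star A] [Zero A] [LE A] (e : A) : Prop :=
  Minimal (fun p ↦ IsStarProjection p ∧ p ≠ 0) e

section CStar

variable {A : Type*} [NonUnitalCStarAlgebra A]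

section Spectra

/- The witness is `∑ 2⁻ⁿ pₙ`, which has every `2⁻ⁿ` as an eigenvalue. -/
theorem exists_isSelfAdjoint_infinite_quasispectrum {p : ℕ → A} (hp : ∀ n, IsStarProjection (p n))
    (hne : ∀ n, p n ≠ 0) (horth : Pairwise fun m n ↦ p m * p n = 0) :
    ∃ a : A, IsSelfAdjoint a ∧ (quasispectrum ℂ a).Infinite := by
  have hsum : Summable fun n ↦ (1 / 2 : ℂ) ^ n • p n := by
    refine Summable.of_norm_bounded summable_geometric_two fun n ↦ ?_
    rw [norm_smul, norm_pow, norm_div, norm_one, Complex.norm_ofNat]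
    exact mul_le_of_le_one_right (by positivity) (hp n).norm_le
  have hmul (n : ℕ) : (∑' m, (1 / 2 : ℂ) ^ m • p m) * p n = (1 / 2 : ℂ) ^ n • p n := by
    rw [← hsum.tsum_mul_right, tsum_eq_single n fun m hm ↦ by
      rw [smul_mul_assoc, horth hm, smul_zero], smul_mul_assoc, (hp n).isIdempotentElem.eq]
  refine ⟨∑' n, (1 / 2 : ℂ) ^ n • p n, ?_, ?_⟩
  · rw [IsSelfAdjoint, tsum_star]
    exact tsum_congr fun n ↦ by simp [(hp n).isSelfAdjoint.star_eq]
  · have hinj : Function.Injective fun n : ℕ ↦ (1 / 2 : ℂ) ^ n := by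
      refine Function.Injective.of_comp (f := norm) ?_
      simpa [Function.comp_def] using
        pow_right_injective₀ (a := (2 : ℝ)⁻¹) (by norm_num) (by norm_num)
    exact Set.infinite_of_injective_forall_mem hinj fun n ↦
      mem_quasispectrum_of_mul_eq_smul (hne n) (hmul n)

theorem exists_isStarProjection_mul_eq_smul {a : A} [IsStarNormal a]
    (hfin : (quasispectrum ℂ a).Finite) (ha : a ≠ 0) :
    ∃ (p : A) (r : ℂ), IsStarProjection p ∧ p ≠ 0 ∧ r ≠ 0 ∧ a * p = r • p := by
  obtain ⟨r, hr, hr0⟩ : ∃ r ∈ quasispectrum ℂ a, r ≠ 0 := by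
    by_contra! h
    refine ha ?_
    rw [← cfcₙ_id ℂ a, ← cfcₙ_zero ℂ a]
    exact cfcₙ_congr h
  let χ : ℂ → ℂ := Pi.single r 1
  have hχ : ContinuousOn χ (quasispectrum ℂ a) := hfin.continuousOn χ
  have hχ0 : χ 0 = 0 := Pi.single_eq_of_ne hr0.symm 1
  refine ⟨cfcₙ χ a, r, ⟨?_, ?_⟩, fun h ↦ ?_, hr0, ?_⟩
  · rw [IsIdempotentElem, ← cfcₙ_mul χ χ a]
    exact cfcₙ_congr fun x _ ↦ by by_cases hx : x = r <;> simp [χ, hx]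
  · rw [IsSelfAdjoint, ← cfcₙ_star]
    exact cfcₙ_congr fun x _ ↦ by by_cases hx : x = r <;> simp [χ, hx]
  · rw [← cfcₙ_zero ℂ a] at h
    simpa [χ] using eqOn_of_cfcₙ_eq_cfcₙ h ‹_› hχ hχ0 continuousOn_const rfl hr
  · nth_rewrite 1 [← cfcₙ_id ℂ a]
    rw [← cfcₙ_mul id χ a, ← cfcₙ_smul r χ a]
    exact cfcₙ_congr fun x _ ↦ by by_cases hx : x = r <;> simp [χ, hx]

theorem exists_isStarProjection_mul_eq_zero
    (hA : ∀ a : A, IsSelfAdjoint a → (quasispectrum ℂ a).Finite) {q : A} (hq : IsStarProjection q)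
    {x : A} (hx : x * q ≠ x) : ∃ p : A, IsStarProjection p ∧ p ≠ 0 ∧ q * p = 0 := by
  set z := x * q - x
  have hzq : z * q = 0 := by rw [sub_mul, mul_assoc, hq.isIdempotentElem.eq, sub_self]
  have hqz : q * star z = 0 := by
    simpa only [star_mul, star_zero, hq.isSelfAdjoint.star_eq] using congr(star $hzq)
  have hsa : IsSelfAdjoint (star z * z) := .star_mul_self z
  have := hsa.isStarNormal
  obtain ⟨p, r, hp, hp0, hr, hzp⟩ := exists_isStarProjection_mul_eq_smul (hA _ hsa)
    (mt (CStarRing.star_mul_self_eq_zero_iff _).1 (sub_ne_zero.2 hx))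
  refine ⟨p, hp, hp0, ?_⟩
  rw [← inv_smul_smul₀ hr p, ← hzp, mul_smul_comm, ← mul_assoc, ← mul_assoc, hqz, zero_mul,
    zero_mul, smul_zero]

end Spectra

section ChainConditions

variable [PartialOrder A] [StarOrderedRing A]

theorem sub_mul_sub_eq_zero_of_le {p q r s : A} (hp : IsStarProjection p) (hq : IsStarProjection q)
    (hr : IsStarProjection r) (hs : IsStarProjection s) (hpq : p ≤ q) (hqr : q ≤ r) (hrs : r ≤ s) :
    (q - p) * (s - r) = 0 := by
  rw [sub_mul, mul_sub, mul_sub, (hq.le_iff_mul_eq_left hr).1 hqr,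
    (hq.le_iff_mul_eq_left hs).1 (hqr.trans hrs), (hp.le_iff_mul_eq_left hr).1 (hpq.trans hqr),
    (hp.le_iff_mul_eq_left hs).1 (hpq.trans (hqr.trans hrs)), sub_self, sub_self, sub_self]

theorem exists_isSelfAdjoint_infinite_quasispectrum_of_strictMono
    {u : ℕ → {p : A // IsStarProjection p}} (hu : StrictMono u) :
    ∃ a : A, IsSelfAdjoint a ∧ (quasispectrum ℂ a).Infinite := by
  have hproj (n : ℕ) : IsStarProjection ((u (n + 1) : A) - u n) :=
    ((u n).2.le_iff_sub (u (n + 1)).2).1 (hu.monotone n.le_succ)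
  exact exists_isSelfAdjoint_infinite_quasispectrum hproj
    (fun n ↦ sub_ne_zero.2 (Subtype.coe_injective.ne (hu n.lt_succ_self).ne'))
    (pairwise_mul_eq_zero_of_lt hproj fun m n hmn ↦
      sub_mul_sub_eq_zero_of_le (u m).2 (u (m + 1)).2 (u n).2 (u (n + 1)).2
        (hu.monotone m.le_succ) (hu.monotone hmn) (hu.monotone n.le_succ))

theorem exists_isSelfAdjoint_infinite_quasispectrum_of_strictAnti
    {u : ℕ → {p : A // IsStarProjection p}} (hu : StrictAnti u) :
    ∃ a : A, IsSelfAdjoint a ∧ (quasispectrum ℂ a).Infinite := by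
  have hproj (n : ℕ) : IsStarProjection ((u n : A) - u (n + 1)) :=
    ((u (n + 1)).2.le_iff_sub (u n).2).1 (hu.antitone n.le_succ)
  exact exists_isSelfAdjoint_infinite_quasispectrum hproj
    (fun n ↦ sub_ne_zero.2 (Subtype.coe_injective.ne (hu n.lt_succ_self).ne'))
    (pairwise_mul_eq_zero_of_lt hproj fun m n hmn ↦
      (isStarProjection_mul_eq_zero_comm (hproj n) (hproj m)).1 <|
        sub_mul_sub_eq_zero_of_le (u (n + 1)).2 (u n).2 (u (m + 1)).2 (u m).2
          (hu.antitone n.le_succ) (hu.antitone hmn) (hu.antitone m.le_succ))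

theorem wellFoundedGT_isStarProjection
    (hA : ∀ a : A, IsSelfAdjoint a → (quasispectrum ℂ a).Finite) :
    WellFoundedGT {p : A // IsStarProjection p} := by
  refine ⟨wellFounded_iff_isEmpty_descending_chain.2 ⟨fun ⟨u, hu⟩ ↦ ?_⟩⟩
  obtain ⟨a, ha, hinf⟩ :=
    exists_isSelfAdjoint_infinite_quasispectrum_of_strictMono (strictMono_nat_of_lt_succ hu)
  exact hinf (hA a ha)

theorem wellFoundedLT_isStarProjection
    (hA : ∀ a : A, IsSelfAdjoint a → (quasispectrum ℂ a).Finite) :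
    WellFoundedLT {p : A // IsStarProjection p} := by
  refine ⟨wellFounded_iff_isEmpty_descending_chain.2 ⟨fun ⟨u, hu⟩ ↦ ?_⟩⟩
  obtain ⟨a, ha, hinf⟩ :=
    exists_isSelfAdjoint_infinite_quasispectrum_of_strictAnti (strictAnti_nat_of_succ_lt hu)
  exact hinf (hA a ha)

theorem exists_isStarProjection_forall_mul_eq_self
    (hA : ∀ a : A, IsSelfAdjoint a → (quasispectrum ℂ a).Finite) :
    ∃ q : A, IsStarProjection q ∧ ∀ x, x * q = x := by
  have := wellFoundedGT_isStarProjection hA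
  obtain ⟨q, hmax⟩ := exists_maximal_of_wellFoundedGT
    (fun _ : {p : A // IsStarProjection p} ↦ True) ⟨⟨0, .zero A⟩, trivial⟩
  refine ⟨q, q.2, fun x ↦ ?_⟩
  by_contra hx
  obtain ⟨p, hp, hp0, hqp⟩ := exists_isStarProjection_mul_eq_zero hA q.2 hx
  have hlt : (q : A) < q + p := lt_add_of_pos_right _ (hp.nonneg.lt_of_ne' hp0)
  exact hlt.not_ge (hmax.le_of_ge (y := ⟨q + p, q.2.add hp hqp⟩) trivial hlt.le)

end ChainConditions

section MinimalProjections

variable [PartialOrder A] {e f : A}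

theorem IsMinimalProjection.isStarProjection (he : IsMinimalProjection e) : IsStarProjection e :=
  he.prop.1

theorem exists_isMinimalProjection_le [WellFoundedLT {p : A // IsStarProjection p}] {p : A}
    (hp : IsStarProjection p) (hp0 : p ≠ 0) : ∃ e ≤ p, IsMinimalProjection e := by
  obtain ⟨e, hle, he⟩ := exists_minimal_le_of_wellFoundedLT
    (fun q : {p : A // IsStarProjection p} ↦ (q : A) ≠ 0) ⟨p, hp⟩ hp0
  exact ⟨e, hle, ⟨e.2, he.prop⟩, fun q hq hqe ↦ he.le_of_le (y := ⟨q, hq.1⟩) hq.2 hqe⟩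

variable [StarOrderedRing A]

theorem IsMinimalProjection.eq_of_mul_eq (he : IsMinimalProjection e) {p : A}
    (hp : IsStarProjection p) (hp0 : p ≠ 0) (h : e * p = p) : p = e :=
  Minimal.eq_of_le he ⟨hp, hp0⟩ ((hp.le_iff_mul_eq_right he.isStarProjection).2 h)

theorem mem_closure_isMinimalProjection [WellFoundedLT {p : A // IsStarProjection p}] {p : A}
    (hp : IsStarProjection p) : p ∈ AddSubmonoid.closure {e : A | IsMinimalProjection e} := by
  lift p to {p : A // IsStarProjection p} using hp
  induction p using WellFoundedLT.induction with
  | ind p ih =>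
    rcases eq_or_ne (p : A) 0 with h0 | h0
    · exact h0 ▸ zero_mem _
    obtain ⟨e, hle, he⟩ := exists_isMinimalProjection_le p.2 h0
    have hsub : IsStarProjection (p - e : A) := (he.isStarProjection.le_iff_sub p.2).1 hle
    have hlt : (p - e : A) < p := sub_lt_self _ (he.isStarProjection.nonneg.lt_of_ne' he.prop.2)
    rw [← sub_add_cancel (p : A) e]
    exact add_mem (ih ⟨_, hsub⟩ hlt) (AddSubmonoid.subset_closure he)

theorem IsMinimalProjection.mul_mul_mem_span
    (hA : ∀ a : A, IsSelfAdjoint a → (quasispectrum ℂ a).Finite) (he : IsMinimalProjection e)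
    (x : A) : e * x * e ∈ ℂ ∙ e := by
  have hidem : e * e = e := he.isStarProjection.isIdempotentElem
  have hstar : star e = e := he.isStarProjection.isSelfAdjoint
  suffices span ℂ (selfAdjoint A : Set A) ≤ (ℂ ∙ e).comap (LinearMap.mulLeftRight ℂ (e, e)) from
    this (span_selfAdjoint (A := A) ▸ mem_top)
  refine span_le.2 fun x hx ↦ ?_
  change e * x * e ∈ ℂ ∙ e
  rcases eq_or_ne (e * x * e) 0 with h0 | h0
  · exact h0 ▸ zero_mem _
  have hsa : IsSelfAdjoint (e * x * e) := by
    simpa only [hstar] using (show IsSelfAdjoint x from hx).conjugate e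
  have := hsa.isStarNormal
  obtain ⟨p, r, hp, hp0, hr, hmul⟩ := exists_isStarProjection_mul_eq_smul (hA _ hsa) h0
  have hep : e * p = p := by
    rw [← inv_smul_smul₀ hr p, ← hmul, mul_smul_comm]
    simp only [← mul_assoc, hidem]
  obtain rfl := he.eq_of_mul_eq hp hp0 hep
  rw [mul_assoc, hidem] at hmul
  exact mem_span_singleton.2 ⟨r, hmul.symm⟩

theorem IsMinimalProjection.mul_mul_mem_span_of_ne_zero
    (hA : ∀ a : A, IsSelfAdjoint a → (quasispectrum ℂ a).Finite) (he : IsMinimalProjection e)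
    (hf : IsMinimalProjection f) {x : A} (hx : e * x * f ≠ 0) (y : A) :
    e * y * f ∈ ℂ ∙ (e * x * f) := by
  set v := e * x * f with hv
  set w := e * y * f with hw
  have hee : e * e = e := he.isStarProjection.isIdempotentElem
  have hff : f * f = f := hf.isStarProjection.isIdempotentElem
  have hev : e * v = v := by simp only [hv, ← mul_assoc, hee]
  have hvf : v * f = v := by rw [hv, mul_assoc, hff]
  have hew : e * w = w := by simp only [hw, ← mul_assoc, hee]
  have hwf : w * f = w := by rw [hw, mul_assoc, hff]
  have hfv : f * star v = star v := by
    simpa [hf.isStarProjection.isSelfAdjoint.star_eq] using congr(star $hvf)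
  have hve : star v * e = star v := by
    simpa [he.isStarProjection.isSelfAdjoint.star_eq] using congr(star $hev)
  obtain ⟨c, hc⟩ : ∃ c : ℂ, c • e = v * star v := by
    simpa only [mem_span_singleton, ← mul_assoc, hev, mul_assoc _ _ e, hve]
      using he.mul_mul_mem_span hA (v * star v)
  obtain ⟨d, hd⟩ : ∃ d : ℂ, d • f = star v * w := by
    simpa only [mem_span_singleton, ← mul_assoc, hfv, mul_assoc _ _ f, hwf]
      using hf.mul_mul_mem_span hA (star v * w)
  have hc0 : c ≠ 0 := by
    rintro rfl
    rw [zero_smul, eq_comm, CStarRing.mul_star_self_eq_zero_iff] at hc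
    exact hx hc
  have hcw : c • w = d • v :=
    calc c • w = v * star v * w := by rw [← hc, smul_mul_assoc, hew]
      _ = d • v := by rw [mul_assoc, ← hd, mul_smul_comm, hvf]
  rw [← smul_mem_iff _ hc0, hcw]
  exact smul_mem _ d (mem_span_singleton_self v)

theorem IsMinimalProjection.exists_forall_mul_mul_mem_span
    (hA : ∀ a : A, IsSelfAdjoint a → (quasispectrum ℂ a).Finite) (he : IsMinimalProjection e)
    (hf : IsMinimalProjection f) : ∃ v : A, ∀ x, e * x * f ∈ ℂ ∙ v := by
  by_cases h : ∃ x, e * x * f ≠ 0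
  · obtain ⟨x, hx⟩ := h
    exact ⟨_, he.mul_mul_mem_span_of_ne_zero hA hf hx⟩
  · push Not at h
    exact ⟨0, fun x ↦ by simp [h x]⟩

theorem exists_finiteDimensional_forall_mul_mul_mem
    (hA : ∀ a : A, IsSelfAdjoint a → (quasispectrum ℂ a).Finite) {p q : A}
    (hp : p ∈ AddSubmonoid.closure {e : A | IsMinimalProjection e})
    (hq : q ∈ AddSubmonoid.closure {e : A | IsMinimalProjection e}) :
    ∃ V : Submodule ℂ A, FiniteDimensional ℂ V ∧ ∀ x, p * x * q ∈ V := by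
  induction hp, hq using AddSubmonoid.closure_induction₂ with
  | mem e f he hf =>
    obtain ⟨v, hv⟩ := he.exists_forall_mul_mul_mem_span hA hf
    exact ⟨ℂ ∙ v, inferInstance, hv⟩
  | zero_left => exact ⟨⊥, inferInstance, by simp⟩
  | zero_right => exact ⟨⊥, inferInstance, by simp⟩
  | add_left p₁ p₂ q _ _ _ h₁ h₂ =>
    obtain ⟨V, hV, hpV⟩ := h₁
    obtain ⟨W, hW, hpW⟩ := h₂
    refine ⟨V ⊔ W, inferInstance, fun x ↦ ?_⟩
    rw [add_mul, add_mul]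
    exact add_mem_sup (hpV x) (hpW x)
  | add_right q₁ q₂ p _ _ _ h₁ h₂ =>
    obtain ⟨V, hV, hqV⟩ := h₁
    obtain ⟨W, hW, hqW⟩ := h₂
    refine ⟨V ⊔ W, inferInstance, fun x ↦ ?_⟩
    rw [mul_add]
    exact add_mem_sup (hqV x) (hqW x)

end MinimalProjections

theorem finiteDimensional_of_finite_quasispectrum
    (hA : ∀ a : A, IsSelfAdjoint a → (quasispectrum ℂ a).Finite) : FiniteDimensional ℂ A := by
  let := CStarAlgebra.spectralOrder A
  have := CStarAlgebra.spectralOrderedRing A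
  have := wellFoundedLT_isStarProjection hA
  obtain ⟨q, hq, hmul⟩ := exists_isStarProjection_forall_mul_eq_self hA
  have hqmul (x : A) : q * x = x := by
    simpa [hq.isSelfAdjoint.star_eq] using congr(star $(hmul (star x)))
  have hmem := mem_closure_isMinimalProjection hq
  obtain ⟨V, hV, hqV⟩ := exists_finiteDimensional_forall_mul_mul_mem hA hmem hmem
  obtain rfl : V = ⊤ := eq_top_iff'.2 fun x ↦ by simpa only [hqmul, hmul] using hqV x
  exact topEquiv.finiteDimensional

end CStar

/-- A (not necessarily unital) C*-algebra `A ≠ {0}` has the fixed point property for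
nonexpansive mappings iff it is finite dimensional over `ℂ`, and both are equivalent to
the finiteness of the spectrum (in the unitization) of every self-adjoint element. -/
theorem cstarAlgebra_hasFPP_iff_finiteDimensional_iff_spectra_finite
    (A : Type*) [NonUnitalCStarAlgebra A] [Nontrivial A] :
    (HasFPP A ↔ FiniteDimensional ℂ A) ∧
    (HasFPP A ↔ ∀ a : A, IsSelfAdjoint a → (quasispectrum ℂ a).Finite) := by
  have hspec (h : HasFPP A) (a : A) (ha : IsSelfAdjoint a) : (quasispectrum ℂ a).Finite :=
    have := ha.isStarNormal
    h.finite_quasispectrum a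
  exact ⟨⟨fun h ↦ finiteDimensional_of_finite_quasispectrum (hspec h),
      fun _ ↦ hasFPP_of_finiteDimensional A⟩,
    ⟨hspec, fun h ↦
      have := finiteDimensional_of_finite_quasispectrum h
      hasFPP_of_finiteDimensional A⟩⟩
end

section
/- If a C*-algebra A has the fixed point property for nonexpansive mappings, then the spectrum of every self-adjoint element of A is finite. -/
/-!
The continuous functional calculus embeds `C(X, ℂ)₀`, for `X` the quasispectrum of `a`,
isometrically in the algebra, so `C(X, ℂ)₀` has the fixed point property. For continuous
`r : X → [0, 1]` and `|h| ≤ r` the map `f ↦ (1 - r) f + h` is nonexpansive, fixes the values on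
`{r = 0}`, and its fixed points are the solutions of `r f = h`. Taking `h = r` or `h = 0`, such a
solution, with suitable values on `{r = 0}`, separates `{r = 0}` from its complement. So zero sets
are open; in the metrizable space `X` points are zero sets, so `X` is discrete and compact.
-/

open Bornology Function Set
open scoped ContinuousMapZero NonUnitalContinuousFunctionalCalculus

section RelaxedDivision

variable {X : Type*} [TopologicalSpace X] [Zero X]

/-- The averaging map `f ↦ (1 - r) f + h` on continuous functions vanishing at the base point.
Its fixed points are the solutions `f` of the division problem `r f = h`. -/
noncomputable def relaxedDivision (r : C(X, ℝ)) (h f : C(X, ℂ)₀) : C(X, ℂ)₀ :=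
  ⟨⟨fun x => (1 - r x) • f x + h x, by fun_prop⟩, by simp⟩

theorem relaxedDivision_apply (r : C(X, ℝ)) (h f : C(X, ℂ)₀) (x : X) :
    relaxedDivision r h f x = (1 - r x) • f x + h x :=
  rfl

theorem isFixedPt_relaxedDivision_iff {r : C(X, ℝ)} {h f : C(X, ℂ)₀} :
    IsFixedPt (relaxedDivision r h) f ↔ ∀ x, r x • f x = h x := by
  rw [IsFixedPt, DFunLike.ext_iff]
  refine forall_congr' fun x => ?_
  rw [relaxedDivision_apply, sub_smul, one_smul, sub_add, sub_eq_self, sub_eq_zero]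

variable [CompactSpace X]

theorem lipschitzWith_one_relaxedDivision {r : C(X, ℝ)} (hr₀ : ∀ x, 0 ≤ r x)
    (hr₁ : ∀ x, r x ≤ 1) (h : C(X, ℂ)₀) : LipschitzWith 1 (relaxedDivision r h) := by
  refine .mk_one fun f₁ f₂ => ?_
  rw [dist_eq_norm, dist_eq_norm]
  refine (ContinuousMap.norm_le _ (norm_nonneg _)).2 fun x => ?_
  calc ‖relaxedDivision r h f₁ x - relaxedDivision r h f₂ x‖
      = (1 - r x) * ‖(f₁ - f₂) x‖ := by
        rw [relaxedDivision_apply, relaxedDivision_apply, add_sub_add_right_eq_sub, ← smul_sub,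
          norm_smul, Real.norm_of_nonneg (sub_nonneg.2 (hr₁ x)), ContinuousMapZero.coe_sub,
          Pi.sub_apply]
    _ ≤ ‖(f₁ - f₂) x‖ := mul_le_of_le_one_left (norm_nonneg _) (sub_le_self _ (hr₀ x))
    _ ≤ ‖f₁ - f₂‖ := ((f₁ - f₂ : C(X, ℂ)₀) : C(X, ℂ)).norm_coe_le_norm x

theorem mapsTo_relaxedDivision_closedBall {r : C(X, ℝ)} (hr₁ : ∀ x, r x ≤ 1)
    {h : C(X, ℂ)₀} (hh : ∀ x, ‖h x‖ ≤ r x) {R : ℝ} (hR : 1 ≤ R) :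
    MapsTo (relaxedDivision r h) (Metric.closedBall 0 R) (Metric.closedBall 0 R) := by
  intro f hf
  rw [mem_closedBall_zero_iff] at hf ⊢
  refine (ContinuousMap.norm_le _ (zero_le_one.trans hR)).2 fun x => ?_
  have hr₀ : 0 ≤ r x := (norm_nonneg _).trans (hh x)
  have hfx : ‖f x‖ ≤ R := ((f : C(X, ℂ)).norm_coe_le_norm x).trans hf
  calc ‖(1 - r x) • f x + h x‖ ≤ (1 - r x) * ‖f x‖ + r x :=
        norm_add_le_of_le (norm_smul_of_nonneg (sub_nonneg.2 (hr₁ x)) _).le (hh x)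
    _ ≤ (1 - r x) * R + r x * R :=
        add_le_add (mul_le_mul_of_nonneg_left hfx (sub_nonneg.2 (hr₁ x)))
          (le_mul_of_one_le_right hr₀ hR)
    _ = R := by ring

end RelaxedDivision

namespace HasFPP

section Normed

variable {B : Type*} [NormedAddCommGroup B] [NormedSpace ℂ B]

theorem exists_isFixedPt (hB : HasFPP B) {K : Set B} (hne : K.Nonempty) (hbdd : IsBounded K)
    (hclosed : IsClosed K) (hconv : Convex ℝ K) {M : B → B} (hM : MapsTo M K K)
    (hlip : LipschitzOnWith 1 M K) : ∃ x ∈ K, IsFixedPt M x := by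
  refine hB K hne hbdd hclosed (fun x hx y hy t ht₀ ht₁ => ?_) M hM fun x hx y hy => ?_
  · simpa only [Complex.coe_smul] using
      hconv hx hy (sub_nonneg.2 ht₁) ht₀ (sub_add_cancel 1 t)
  · simpa using hlip.norm_sub_le hx hy

theorem of_isometry {E F : Type*} [NormedAddCommGroup E] [NormedSpace ℂ E] [CompleteSpace E]
    [FunLike F E B] [LinearMapClass F ℂ E B] {φ : F} (hφ : Isometry φ) (hB : HasFPP B) :
    HasFPP E := by
  intro K hne hbdd hclosed hconv M hM hnonexp
  have hinv : LeftInverse (invFun φ) φ := leftInverse_invFun hφ.injective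
  obtain ⟨_, ⟨x, hx, rfl⟩, hfix⟩ := hB (φ '' K) (hne.image φ)
    (hφ.lipschitz.isBounded_image hbdd) (hφ.isClosedEmbedding.isClosedMap K hclosed)
    (forall_mem_image.2 fun x hx => forall_mem_image.2 fun y hy t ht₀ ht₁ =>
      ⟨_, hconv x hx y hy t ht₀ ht₁, by simp only [map_add, map_smul]⟩)
    (φ ∘ M ∘ invFun φ)
    (mapsTo_image_iff.2 fun x hx => ⟨M x, hM hx, by simp only [comp_apply, hinv x]⟩)
    (forall_mem_image.2 fun x hx => forall_mem_image.2 fun y hy => by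
      simpa only [comp_apply, hinv x, hinv y, ← dist_eq_norm, hφ.dist_eq] using
        hnonexp x hx y hy)
  exact ⟨x, hx, hφ.injective (by simpa only [comp_apply, hinv x] using hfix)⟩

end Normed

section ContinuousMapZero

variable {X : Type*} [TopologicalSpace X] [CompactSpace X] [Zero X]

theorem exists_smul_eq_and_eqOn (hX : HasFPP C(X, ℂ)₀) {r : C(X, ℝ)} (hr₁ : ∀ x, r x ≤ 1)
    {h : C(X, ℂ)₀} (hh : ∀ x, ‖h x‖ ≤ r x) (g : C(X, ℂ)₀) :
    ∃ f : C(X, ℂ)₀, (∀ x, r x • f x = h x) ∧ EqOn f g {x | r x = 0} := by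
  let E : Set C(X, ℂ)₀ := {f | EqOn f g {x | r x = 0}}
  have hE_closed : IsClosed E := by
    simp only [E, EqOn, ofPred_forall]
    exact isClosed_biInter fun x _ => isClosed_eq (continuous_eval_const x) continuous_const
  have hE_convex : Convex ℝ E := fun f₁ hf₁ f₂ hf₂ s t _ _ hst x hx => by
    change s • f₁ x + t • f₂ x = g x
    rw [hf₁ hx, hf₂ hx, Convex.combo_self hst]
  have hE_mapsTo : MapsTo (relaxedDivision r h) E E := fun f hf x (hx : r x = 0) => by
    have hhx : h x = 0 := norm_le_zero_iff.1 (hx ▸ hh x)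
    rw [relaxedDivision_apply, hx, hhx, sub_zero, one_smul, add_zero, hf hx]
  obtain ⟨f, ⟨-, hfg⟩, hf⟩ := hX.exists_isFixedPt (K := Metric.closedBall 0 (max 1 ‖g‖) ∩ E)
    ⟨g, by simp [E, EqOn]⟩ (Metric.isBounded_closedBall.subset inter_subset_left)
    (Metric.isClosed_closedBall.inter hE_closed) ((convex_closedBall _ _).inter hE_convex)
    ((mapsTo_relaxedDivision_closedBall hr₁ hh (le_max_left _ _)).inter_inter hE_mapsTo)
    (lipschitzWith_one_relaxedDivision (fun x => (norm_nonneg _).trans (hh x)) hr₁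
      h).lipschitzOnWith
  exact ⟨f, isFixedPt_relaxedDivision_iff.1 hf, hfg⟩

theorem isOpen_setOf_eq_zero_of_mem_Icc (hX : HasFPP C(X, ℂ)₀) {r : C(X, ℝ)}
    (hr : ∀ x, r x ∈ Icc 0 1) : IsOpen {x | r x = 0} := by
  have hr₀ (x : X) : 0 ≤ r x := (hr x).1
  have hr₁ (x : X) : r x ≤ 1 := (hr x).2
  by_cases hbase : r 0 = 0
  · let h : C(X, ℂ)₀ := ⟨⟨fun x => (r x : ℂ), by fun_prop⟩, by simp [hbase]⟩
    obtain ⟨f, hfh, hf₀⟩ := hX.exists_smul_eq_and_eqOn hr₁ (h := h)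
      (fun x => (Complex.norm_of_nonneg (hr₀ x)).le) 0
    have hf₁ (x : X) (hx : r x ≠ 0) : f x = 1 :=
      smul_right_injective ℂ hx ((hfh x).trans (Algebra.algebraMap_eq_smul_one (r x)))
    have hzero : {x | r x = 0} = {x | f x ≠ 1} := by
      ext x
      exact ⟨fun hx => by simp [hf₀ hx], fun hx => not_not.1 (mt (hf₁ x) hx)⟩
    rw [hzero]
    exact isOpen_ne_fun (map_continuous f) continuous_const
  · let g : C(X, ℂ)₀ := ⟨⟨fun x => ((1 - r x / r 0 : ℝ) : ℂ), by fun_prop⟩, by simp [hbase]⟩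
    obtain ⟨f, hf₀, hfg⟩ := hX.exists_smul_eq_and_eqOn hr₁ (h := 0) (by simpa using hr₀) g
    have hf₁ (x : X) (hx : r x = 0) : f x = 1 := by
      simpa [g, hx] using hfg hx
    have hzero : {x | r x = 0} = {x | f x ≠ 0} := by
      ext x
      exact ⟨fun hx => by simp [hf₁ x hx], (smul_eq_zero.1 (hf₀ x)).resolve_right⟩
    rw [hzero]
    exact isOpen_ne_fun (map_continuous f) continuous_const

theorem isOpen_setOf_eq_zero (hX : HasFPP C(X, ℂ)₀) {r : X → ℝ} (hr : Continuous r) :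
    IsOpen {x | r x = 0} := by
  let w : C(X, ℝ) := ⟨fun x => min 1 |r x|, by fun_prop⟩
  have hw_eq_zero (x : X) : w x = 0 ↔ r x = 0 := by
    simp +contextual [w, min_eq_iff]
  simpa only [hw_eq_zero] using hX.isOpen_setOf_eq_zero_of_mem_Icc (r := w)
    fun x => ⟨le_min zero_le_one (abs_nonneg _), min_le_left _ _⟩

theorem finite_of_continuousMapZero_s1 [TopologicalSpace.MetrizableSpace X] (hX : HasFPP C(X, ℂ)₀) :
    Finite X := by
  let := TopologicalSpace.metrizableSpaceMetric X
  have : DiscreteTopology X := discreteTopology_iff_isOpen_singleton.2 fun p => by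
    simpa only [dist_eq_zero, ofPred_eq_eq_singleton] using
      hX.isOpen_setOf_eq_zero (r := (dist · p)) (by fun_prop)
  exact finite_of_compact_of_discrete

end ContinuousMapZero

end HasFPP

theorem spectrum_finite_of_hasFPP_general {A : Type*} {p : A → Prop} [NonUnitalNormedRing A]
    [StarRing A] [NormedSpace ℂ A] [IsScalarTower ℂ A A] [SMulCommClass ℂ A A]
    [NonUnitalIsometricContinuousFunctionalCalculus ℂ A p] (hFPP : HasFPP A) {a : A}
    (ha : p a) : (quasispectrum ℂ a).Finite :=
  (hFPP.of_isometry (isometry_cfcₙHom a ha)).finite_of_continuousMapZero_s1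

/-- If a (not necessarily unital) C*-algebra has the fixed point property for nonexpansive
mappings, then the spectrum (in the unitization) of every self-adjoint element is finite. -/
theorem spectrum_finite_of_hasFPP
    (A : Type*) [NonUnitalCStarAlgebra A] (hFPP : HasFPP A) :
    ∀ a : A, IsSelfAdjoint a → (quasispectrum ℂ a).Finite := by
  intro a ha
  exact spectrum_finite_of_hasFPP_general hFPP ha.isStarNormal
end

section
/- If S is an infinite compact subset of ℂ, then the C*-algebra C(S) of continuous complex-valued functions on S with the supremum norm does not have the fixed point property for nonexpansive mappings: there exist a nonempty bounded closed convex subset K of C(S) and a nonexpansive map M : K → K with no fixed point. -/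
/-!
Suppose `u : X → ℝ` is continuous with `|u| ≤ 1` and its peak set `{u = 1}` is not open. Then
`f ↦ u • f` is nonexpansive on the functions of norm at most `‖v‖` which equal `v` on `{u = 1}`.
A fixed point would have to vanish wherever `u ≠ 1`, so for `v ≠ 0` the peak set would be its
support, which is open.

An infinite compact Hausdorff space carries such a `u`: a series of bump functions with disjoint
supports gives a continuous `g` with `g (xₙ) = 2⁻ⁿ`. If `{g = 0}` were open, `|g|` would be bounded
below on its compact complement. Now take `u = 1 - min |g| 1`.
-/

open Set Metric unitInterval

/-- The fixed point property for nonexpansive mappings. A self-map of `K` is encoded as a map on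
the whole space which is only constrained on `K`. -/
def HasFixedPointProperty (E : Type*) [NormedAddCommGroup E] [NormedSpace ℝ E] : Prop :=
  ∀ K : Set E, K.Nonempty → Bornology.IsBounded K → IsClosed K → Convex ℝ K →
    ∀ M : E → E, MapsTo M K K → LipschitzOnWith 1 M K → ∃ f ∈ K, Function.IsFixedPt M f

theorem not_hasFixedPointProperty_iff {E : Type*} [NormedAddCommGroup E] [NormedSpace ℝ E] :
    ¬ HasFixedPointProperty E ↔
      ∃ K : Set E, K.Nonempty ∧ Bornology.IsBounded K ∧ IsClosed K ∧ Convex ℝ K ∧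
        ∃ M : E → E, MapsTo M K K ∧ (∀ f ∈ K, ∀ g ∈ K, ‖M f - M g‖ ≤ ‖f - g‖) ∧
          ∀ f ∈ K, M f ≠ f := by
  simp [HasFixedPointProperty, lipschitzOnWith_iff_norm_sub_le, Function.IsFixedPt]

section BumpSeries

variable (X : Type*) [TopologicalSpace X] [T35Space X] [Infinite X]

theorem exists_seq_continuousMap_unitInterval_apply_eq_single :
    ∃ (x : ℕ → X) (φ : ℕ → C(X, I)), ∀ m n, φ m (x n) = Pi.single (M := fun _ ↦ I) m 1 n := by
  obtain ⟨U, hU_inf, hU_open, hU_disj⟩ := exists_seq_infinite_isOpen_pairwise_disjoint X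
  choose x hx using fun n ↦ (hU_inf n).nonempty
  choose ψ hψ_cont hψ_zero hψ_one using fun n ↦
    CompletelyRegularSpace.completely_regular_isOpen (x n) (U n) (hU_open n) (hx n)
  refine ⟨x, fun n ↦ ⟨fun y ↦ σ (ψ n y), by fun_prop⟩, fun m n ↦ ?_⟩
  rcases eq_or_ne n m with rfl | hnm
  · simp [hψ_zero]
  · have hxn : x n ∈ (U m)ᶜ := disjoint_left.mp (hU_disj hnm) (hx n)
    simp [hψ_one m hxn, hnm]

theorem exists_continuousMap_apply_eq_of_summable_norm {F : Type*} [NormedAddCommGroup F]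
    [NormedSpace ℝ F] [CompleteSpace F] {a : ℕ → F} (ha : Summable fun n ↦ ‖a n‖) :
    ∃ (g : C(X, F)) (x : ℕ → X), ∀ n, g (x n) = a n := by
  obtain ⟨x, φ, hφ⟩ := exists_seq_continuousMap_unitInterval_apply_eq_single X
  have hbound (n : ℕ) (y : X) : ‖(φ n y : ℝ) • a n‖ ≤ ‖a n‖ := by
    rw [norm_smul, Real.norm_of_nonneg (φ n y).2.1]
    exact mul_le_of_le_one_left (norm_nonneg _) (φ n y).2.2
  refine ⟨⟨fun y ↦ ∑' n, (φ n y : ℝ) • a n, continuous_tsum (by fun_prop) ha hbound⟩, x,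
    fun n ↦ ?_⟩
  calc ∑' m, (φ m (x n) : ℝ) • a m = (φ n (x n) : ℝ) • a n :=
        tsum_eq_single n fun m hmn ↦ by simp [hφ, hmn.symm]
    _ = a n := by simp [hφ]

end BumpSeries

section ZeroSet

variable {X : Type*} [TopologicalSpace X] [CompactSpace X]

theorem exists_pos_forall_le_norm_of_isOpen_preimage_zero {F : Type*} [NormedAddCommGroup F]
    {g : C(X, F)} (hg : IsOpen (g ⁻¹' {0})) : ∃ ε > 0, ∀ x, g x ≠ 0 → ε ≤ ‖g x‖ :=
  hg.isClosed_compl.isCompact.exists_forall_le' (f := fun x ↦ ‖g x‖) (by fun_prop)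
    fun _ hx ↦ norm_pos_iff.mpr hx

variable (X) [T2Space X] [Infinite X]

theorem exists_continuousMap_not_isOpen_preimage_zero :
    ∃ g : C(X, ℝ), ¬ IsOpen (g ⁻¹' {0}) := by
  have hsum : Summable fun n : ℕ ↦ ‖(1 / 2 : ℝ) ^ n‖ := by
    simpa using summable_geometric_two
  obtain ⟨g, x, hgx⟩ := exists_continuousMap_apply_eq_of_summable_norm X hsum
  refine ⟨g, fun hopen ↦ ?_⟩
  obtain ⟨ε, hε, hle⟩ := exists_pos_forall_le_norm_of_isOpen_preimage_zero hopen
  obtain ⟨n, hn⟩ := exists_pow_lt_of_lt_one hε one_half_lt_one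
  have hεn : ε ≤ (1 / 2) ^ n := by simpa [hgx] using hle (x n) (by simp [hgx])
  exact hεn.not_gt hn

theorem exists_norm_le_one_not_isOpen_preimage_one :
    ∃ u : C(X, ℝ), ‖u‖ ≤ 1 ∧ ¬ IsOpen (u ⁻¹' {1}) := by
  obtain ⟨g, hg⟩ := exists_continuousMap_not_isOpen_preimage_zero X
  refine ⟨⟨fun x ↦ 1 - min |g x| 1, by fun_prop⟩, ?_, ?_⟩
  · refine (ContinuousMap.norm_le _ zero_le_one).mpr fun x ↦ abs_le.mpr ⟨?_, ?_⟩
    · change -1 ≤ 1 - min |g x| 1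
      linarith [min_le_right |g x| 1]
    · exact sub_le_self 1 (le_min (abs_nonneg _) zero_le_one)
  · convert hg using 2
    ext x
    have hmin : min |g x| 1 = 0 ↔ g x = 0 := by
      grind
    simpa using hmin

end ZeroSet

section PeakSet

variable {X E : Type*} [TopologicalSpace X] [NormedAddCommGroup E]

theorem isOpen_preimage_one_of_smul_eq_self [NormedSpace ℝ E] {u : X → ℝ} {f : X → E} {v : E}
    (hv : v ≠ 0) (hf_cont : Continuous f) (hf_peak : ∀ x ∈ u ⁻¹' {1}, f x = v)
    (hfix : ∀ x, u x • f x = f x) : IsOpen (u ⁻¹' {1}) := by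
  have hsupport : u ⁻¹' {1} = f ⁻¹' {0}ᶜ := by
    ext x
    refine ⟨fun hx ↦ by simpa [hf_peak x hx] using hv, fun hx ↦ ?_⟩
    exact smul_left_injective ℝ hx ((hfix x).trans (one_smul ℝ _).symm)
  rw [hsupport]
  exact isOpen_compl_singleton.preimage hf_cont

variable [CompactSpace X]

/-- The functions which take the value `v` on `Z` and have the least norm that this allows for
nonempty `Z`: a convex set preserved by multiplication with a function peaking on `Z`. -/
def normMinimalExtensions (Z : Set X) (v : E) : Set C(X, E) :=
  closedBall 0 ‖v‖ ∩ {f | ∀ x ∈ Z, f x = v}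

variable {Z : Set X} {v : E}

theorem const_mem_normMinimalExtensions :
    ContinuousMap.const X v ∈ normMinimalExtensions Z v :=
  ⟨mem_closedBall_zero_iff.mpr <| (ContinuousMap.norm_le _ (norm_nonneg v)).mpr fun _ ↦ le_rfl,
    fun _ _ ↦ rfl⟩

theorem isBounded_normMinimalExtensions : Bornology.IsBounded (normMinimalExtensions Z v) :=
  isBounded_closedBall.subset inter_subset_left

theorem isClosed_normMinimalExtensions : IsClosed (normMinimalExtensions Z v) :=
  isClosed_closedBall.inter <| ContinuousMap.isClosed_setOfPred_mapsTo isClosed_singleton Z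

theorem norm_continuousMap_smul_le {R : Type*} [SeminormedRing R] [Module R E] [IsBoundedSMul R E]
    (u : C(X, R)) (f : C(X, E)) : ‖u • f‖ ≤ ‖u‖ * ‖f‖ := by
  refine (ContinuousMap.norm_le _ (by positivity)).mpr fun x ↦ ?_
  calc ‖u x • f x‖ ≤ ‖u x‖ * ‖f x‖ := norm_smul_le _ _
    _ ≤ ‖u‖ * ‖f‖ := by gcongr <;> exact ContinuousMap.norm_coe_le_norm _ x

theorem lipschitzWith_continuousMap_smul {R : Type*} [SeminormedRing R] [Module R E]
    [IsBoundedSMul R E] (u : C(X, R)) : LipschitzWith ‖u‖₊ fun f : C(X, E) ↦ u • f :=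
  LipschitzWith.of_dist_le_mul fun f g ↦ by
    simpa only [coe_nnnorm, dist_eq_norm, smul_sub] using norm_continuousMap_smul_le u (f - g)

variable [NormedSpace ℝ E]

theorem convex_normMinimalExtensions : Convex ℝ (normMinimalExtensions Z v) := by
  refine (convex_closedBall 0 ‖v‖).inter fun f hf g hg a b _ _ hab x hx ↦ ?_
  calc a • f x + b • g x = (a + b) • v := by rw [hf x hx, hg x hx, add_smul]
    _ = v := by rw [hab, one_smul]

variable {u : C(X, ℝ)}

theorem mapsTo_smul_normMinimalExtensions (hu : ‖u‖ ≤ 1) :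
    MapsTo (fun f ↦ u • f) (normMinimalExtensions (u ⁻¹' {1}) v)
      (normMinimalExtensions (u ⁻¹' {1}) v) := by
  rintro f ⟨hf_norm, hf_peak⟩
  rw [mem_closedBall_zero_iff] at hf_norm
  refine ⟨mem_closedBall_zero_iff.mpr ?_, fun x hx ↦ ?_⟩
  · calc ‖u • f‖ ≤ ‖u‖ * ‖f‖ := norm_continuousMap_smul_le u f
      _ ≤ 1 * ‖v‖ := by gcongr
      _ = ‖v‖ := one_mul _
  · calc u x • f x = (1 : ℝ) • v := by rw [hf_peak x hx, mem_singleton_iff.mp hx]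
      _ = v := one_smul ℝ v

theorem not_hasFixedPointProperty_of_not_isOpen_preimage_one [Nontrivial E] (hu : ‖u‖ ≤ 1)
    (hpeak : ¬ IsOpen (u ⁻¹' {1})) : ¬ HasFixedPointProperty C(X, E) := by
  intro hE
  obtain ⟨v, hv⟩ := exists_ne (0 : E)
  obtain ⟨f, hf, hfix⟩ := hE (normMinimalExtensions (u ⁻¹' {1}) v)
    ⟨_, const_mem_normMinimalExtensions⟩ isBounded_normMinimalExtensions
    isClosed_normMinimalExtensions convex_normMinimalExtensions (fun f ↦ u • f)
    (mapsTo_smul_normMinimalExtensions hu)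
    ((lipschitzWith_continuousMap_smul u).weaken hu).lipschitzOnWith
  exact hpeak <| isOpen_preimage_one_of_smul_eq_self hv f.continuous hf.2 (DFunLike.congr_fun hfix)

end PeakSet

theorem continuousMap_not_hasFPP_general (X E : Type*) [TopologicalSpace X] [CompactSpace X]
    [T2Space X] [Infinite X] [NormedAddCommGroup E] [NormedSpace ℝ E] [Nontrivial E] :
    ¬ HasFixedPointProperty C(X, E) := by
  obtain ⟨u, hu, hpeak⟩ := exists_norm_le_one_not_isOpen_preimage_one X
  exact not_hasFixedPointProperty_of_not_isOpen_preimage_one hu hpeak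

/-- If `S` is an infinite compact subset of `ℂ`, then the C*-algebra `C(S, ℂ)` of
continuous complex-valued functions on `S` (with the supremum norm) fails the fixed point
property for nonexpansive mappings: there is a nonempty bounded closed convex subset `K`
and a nonexpansive self-map of `K` with no fixed point. -/
theorem continuousMap_not_hasFPP
    (S : Set ℂ) [CompactSpace S] (hS : S.Infinite) :
    ∃ K : Set C(S, ℂ), K.Nonempty ∧ Bornology.IsBounded K ∧ IsClosed K ∧
      (∀ x ∈ K, ∀ y ∈ K, ∀ t : ℝ, 0 ≤ t → t ≤ 1 →
        ((1 - t : ℝ) : ℂ) • x + ((t : ℝ) : ℂ) • y ∈ K) ∧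
      ∃ M : C(S, ℂ) → C(S, ℂ), Set.MapsTo M K K ∧
        (∀ x ∈ K, ∀ y ∈ K, ‖M x - M y‖ ≤ ‖x - y‖) ∧
        ∀ x ∈ K, M x ≠ x := by
  have : Infinite S := hS.to_subtype
  obtain ⟨K, hK_nonempty, hK_bounded, hK_closed, hK_convex, hM⟩ :=
    not_hasFixedPointProperty_iff.mp (continuousMap_not_hasFPP_general S ℂ)
  refine ⟨K, hK_nonempty, hK_bounded, hK_closed, fun x hx y hy t ht₀ ht₁ ↦ ?_, hM⟩
  simpa only [Complex.coe_smul] using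
    hK_convex hx hy (sub_nonneg.mpr ht₁) ht₀ (sub_add_cancel 1 t)
end

section
/- Let S be an infinite compact subset of ℂ, let p ∈ S be a limit point of S, let K = {A ∈ C(S) : ‖A‖ ≤ 1 and A(p) = 1}, and let B ∈ K satisfy |B(s)| < 1 for all s ∈ S with s ≠ p. Then K is a nonempty bounded closed convex subset of C(S), the map M_B : K → K defined by M_B(A) = B·A (pointwise product) is well-defined and nonexpansive, and M_B has no fixed point in K. -/
/-!
Evaluating a fixed point equation `B * A = A` near `p`, where `A` is close to `A p = 1`, forces
`B = 1` on a whole neighbourhood of `p`: indeed `(B s - 1) * A s = 0` gives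
`‖B s - 1‖ = ‖(B s - 1) * (1 - A s)‖ ≤ ‖B s - 1‖ * ‖1 - A s‖`, and `‖1 - A s‖ < 1`. This is
impossible when `‖B s‖ < 1` away from `p` and `p` is not isolated.
-/

open Filter Metric Set
open scoped Topology

section NormedRing

variable {X R : Type*}

theorem norm_mul_sub_mul_le_of_norm_le_one [NonUnitalSeminormedRing R] {b : R} (hb : ‖b‖ ≤ 1)
    (x y : R) : ‖b * x - b * y‖ ≤ ‖x - y‖ :=
  calc
    ‖b * x - b * y‖ = ‖b * (x - y)‖ := by rw [mul_sub]
    _ ≤ ‖b‖ * ‖x - y‖ := norm_mul_le _ _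
    _ ≤ ‖x - y‖ := mul_le_of_le_one_left (norm_nonneg _) hb

theorem eq_one_of_mul_eq_right_of_norm_one_sub_lt_one [NormedRing R] {a b : R}
    (hba : b * a = a) (ha : ‖1 - a‖ < 1) : b = 1 := by
  have h_absorb : (b - 1) * (1 - a) = b - 1 := by
    rw [mul_sub, mul_one, sub_mul, hba, one_mul, sub_self, sub_zero]
  have h_norm : ‖b - 1‖ ≤ ‖b - 1‖ * ‖1 - a‖ := by
    simpa only [h_absorb] using norm_mul_le (b - 1) (1 - a)
  by_contra hb
  exact (mul_lt_of_lt_one_right (norm_sub_pos_iff.2 hb) ha).not_ge h_norm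

theorem eventuallyEq_one_of_mul_eventuallyEq_right [NormedRing R] {l : Filter X} {f g : X → R}
    (hf : Tendsto f l (𝓝 1)) (hgf : g * f =ᶠ[l] f) : g =ᶠ[l] 1 := by
  have hf_near : ∀ᶠ x in l, f x ∈ ball 1 1 := hf.eventually_mem (ball_mem_nhds 1 one_pos)
  filter_upwards [hf_near, hgf] with x hx hgfx
  exact eq_one_of_mul_eq_right_of_norm_one_sub_lt_one hgfx (mem_ball_iff_norm'.1 hx)

theorem frequently_ne_one_of_norm_lt_one [TopologicalSpace X] [Norm R] [One R] [NormOneClass R]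
    {f : X → R} {p : X} [(𝓝[≠] p).NeBot] (hf : ∀ x, x ≠ p → ‖f x‖ < 1) :
    ∃ᶠ x in 𝓝 p, f x ≠ 1 := by
  have h_punctured : ∀ᶠ x in 𝓝[≠] p, f x ≠ 1 := by
    filter_upwards [self_mem_nhdsWithin] with x hx hfx
    exact (hf x hx).ne (by rw [hfx, norm_one])
  exact h_punctured.frequently.filter_mono nhdsWithin_le_nhds

end NormedRing

section UnitBallFace

variable {X R : Type*} [TopologicalSpace X] [CompactSpace X] [NormedRing R]

variable (R) in
/-- The face of the closed unit ball of `C(X, R)` on which evaluation at `p` takes the value `1`;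
for `X = S` and `R = ℂ` it is the set `K` of Goebel's example. -/
def unitBallFace (p : X) : Set C(X, R) :=
  {A | ‖A‖ ≤ 1 ∧ A p = 1}

variable {p : X} {A B : C(X, R)}

theorem unitBallFace_eq_closedBall_inter :
    unitBallFace R p = closedBall 0 1 ∩ {A : C(X, R) | A p = 1} := by
  ext A
  exact and_congr_left' mem_closedBall_zero_iff.symm

theorem isBounded_unitBallFace : Bornology.IsBounded (unitBallFace R p) := by
  rw [unitBallFace_eq_closedBall_inter]
  exact isBounded_closedBall.subset inter_subset_left

theorem isClosed_unitBallFace : IsClosed (unitBallFace R p) := by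
  rw [unitBallFace_eq_closedBall_inter]
  exact isClosed_closedBall.inter (isClosed_eq (continuous_eval_const p) continuous_const)

theorem convex_unitBallFace [NormedSpace ℝ R] : Convex ℝ (unitBallFace R p) := by
  rw [unitBallFace_eq_closedBall_inter]
  exact (convex_closedBall 0 1).inter
    ((convex_singleton 1).linear_preimage (ContinuousMap.evalCLM ℝ p).toLinearMap)

theorem mul_mem_unitBallFace (hB : B ∈ unitBallFace R p) (hA : A ∈ unitBallFace R p) :
    B * A ∈ unitBallFace R p :=
  ⟨(norm_mul_le B A).trans (mul_le_one₀ hB.1 (norm_nonneg A) hA.1), by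
    rw [ContinuousMap.mul_apply, hB.2, hA.2, mul_one]⟩

theorem mul_ne_right_of_mem_unitBallFace (hB : ∃ᶠ x in 𝓝 p, B x ≠ 1)
    (hA : A ∈ unitBallFace R p) : B * A ≠ A := by
  intro h_fixed
  have hA_tendsto : Tendsto A (𝓝 p) (𝓝 1) := hA.2 ▸ A.continuous.tendsto p
  have hB_one : ⇑B =ᶠ[𝓝 p] 1 := eventuallyEq_one_of_mul_eventuallyEq_right hA_tendsto
    (.of_eq (congrArg DFunLike.coe h_fixed))
  obtain ⟨x, hx_ne_one, hx_one⟩ := (hB.and_eventually hB_one).exists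
  exact hx_ne_one hx_one

theorem goebel_multiplication_map_no_fixed_point_general [NormedSpace ℝ R]
    (hB : B ∈ unitBallFace R p) (hB_ne_one : ∃ᶠ x in 𝓝 p, B x ≠ 1) :
    (unitBallFace R p).Nonempty ∧ Bornology.IsBounded (unitBallFace R p) ∧
      IsClosed (unitBallFace R p) ∧ Convex ℝ (unitBallFace R p) ∧
      (∀ A ∈ unitBallFace R p, B * A ∈ unitBallFace R p) ∧
      (∀ A ∈ unitBallFace R p, ∀ A' ∈ unitBallFace R p, ‖B * A - B * A'‖ ≤ ‖A - A'‖) ∧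
      ∀ A ∈ unitBallFace R p, B * A ≠ A :=
  ⟨⟨B, hB⟩, isBounded_unitBallFace, isClosed_unitBallFace, convex_unitBallFace,
    fun _ hA => mul_mem_unitBallFace hB hA,
    fun A _ A' _ => norm_mul_sub_mul_le_of_norm_le_one hB.1 A A',
    fun _ hA => mul_ne_right_of_mem_unitBallFace hB_ne_one hA⟩

end UnitBallFace

/-- Goebel's example: let `S` be an infinite compact subset of `ℂ`, let `p ∈ S` be a limit
point of `S`, let `K = {A ∈ C(S, ℂ) : ‖A‖ ≤ 1 ∧ A p = 1}`, and let `B ∈ K` satisfy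
`|B s| < 1` for all `s ≠ p`.  Then `K` is a nonempty bounded closed convex set, the map
`A ↦ B * A` (pointwise product) maps `K` into itself and is nonexpansive, and it has no
fixed point in `K`. -/
theorem goebel_multiplication_map_no_fixed_point
    (S : Set ℂ) [CompactSpace S] (hS : S.Infinite)
    (p : S) (hp : AccPt (p : ℂ) (Filter.principal S))
    (K : Set C(S, ℂ)) (hK : K = {A : C(S, ℂ) | ‖A‖ ≤ 1 ∧ A p = 1})
    (B : C(S, ℂ)) (hB : B ∈ K) (hBlt : ∀ s : S, s ≠ p → ‖B s‖ < 1) :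
    K.Nonempty ∧ Bornology.IsBounded K ∧ IsClosed K ∧
      (∀ x ∈ K, ∀ y ∈ K, ∀ t : ℝ, 0 ≤ t → t ≤ 1 →
        ((1 - t : ℝ) : ℂ) • x + ((t : ℝ) : ℂ) • y ∈ K) ∧
      (∀ A ∈ K, B * A ∈ K) ∧
      (∀ A ∈ K, ∀ A' ∈ K, ‖B * A - B * A'‖ ≤ ‖A - A'‖) ∧
      ∀ A ∈ K, B * A ≠ A := by
  subst hK
  have : (𝓝[≠] p).NeBot := nhds_ne_subtype_neBot_iff.2 hp
  obtain ⟨h_nonempty, h_bounded, h_closed, h_convex, h_mul⟩ :=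
    goebel_multiplication_map_no_fixed_point_general hB (frequently_ne_one_of_norm_lt_one hBlt)
  exact ⟨h_nonempty, h_bounded, h_closed, fun x hx y hy t ht₀ ht₁ =>
    h_convex hx hy (sub_nonneg.2 ht₁) ht₀ (sub_add_cancel 1 t), h_mul⟩
end

section
/- Let A be a C*-algebra in which the spectrum of every self-adjoint element is finite. Then there is no strictly increasing sequence of projections (P_n)_{n∈ℕ} in A (with P_n ≤ P_{n+1} and P_n ≠ P_{n+1} for all n), and likewise no strictly decreasing sequence of projections. -/
/-!
Up to sign, the successive differences of a strictly monotone sequence of projections are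
nonzero, pairwise orthogonal projections `q n`. For distinct real weights `c n` decaying fast
enough, the series `∑ c n • q n` converges to a self-adjoint element, and multiplying it by `q n`
shows that every `c n` is an eigenvalue. Hence its spectrum is infinite.
-/

section Eigenvalues

theorem mem_quasispectrum_of_mul_eq_smul_s10 {R A : Type*} [CommSemiring R] [NonUnitalRing A]
    [Module R A] [IsScalarTower R A A] {a q : A} {r : R} (hq : q ≠ 0) (haq : a * q = r • q) :
    r ∈ quasispectrum R a := by
  intro hr hreg
  obtain ⟨y, -, hy⟩ := isQuasiregular_iff.mp hreg
  have hxq : -(hr.unit⁻¹ • a) * q = -q := by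
    rw [neg_mul, smul_mul_assoc, haq, neg_inj, inv_smul_eq_iff, Units.smul_def, hr.unit_spec]
  have hzero := congrArg (· * q) hy
  simp only [add_mul, mul_assoc, hxq, zero_mul] at hzero
  exact hq (by simpa using hzero)

theorem tsum_smul_mul_eq_smul {ι R A : Type*} [NonUnitalNonAssocSemiring A] [TopologicalSpace A]
    [IsTopologicalSemiring A] [T2Space A] [SMulZeroClass R A] [IsScalarTower R A A]
    {c : ι → R} {q : ι → A} (hsum : Summable fun i => c i • q i)
    (horth : Pairwise fun i j => q i * q j = 0) {i : ι} (hi : IsIdempotentElem (q i)) :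
    (∑' j, c j • q j) * q i = c i • q i := by
  rw [← hsum.tsum_mul_right, tsum_eq_single i, smul_mul_assoc, hi.eq]
  intro j hji
  rw [smul_mul_assoc, horth hji, smul_zero]

theorem exists_injective_summable_smul (𝕜 : Type*) {E : Type*} [RCLike 𝕜]
    [SeminormedAddCommGroup E] [NormedSpace 𝕜 E] [CompleteSpace E] (q : ℕ → E) :
    ∃ c : ℕ → ℝ, Function.Injective c ∧ Summable fun n => (c n : 𝕜) • q n := by
  -- Partial sums, rather than `1 + ‖q n‖` itself, keep the weights strictly decreasing.
  let s : ℕ → ℝ := fun n => 1 + ∑ k ∈ Finset.range (n + 1), ‖q k‖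
  have hpos (n : ℕ) : 0 < s n := by positivity
  have hmono (n : ℕ) : s n ≤ s (n + 1) := by
    simp only [s, Finset.sum_range_succ _ (n + 1), ← add_assoc]
    exact le_add_of_nonneg_right (norm_nonneg _)
  have hle (n : ℕ) : ‖q n‖ ≤ s n :=
    le_add_of_nonneg_of_le zero_le_one <|
      Finset.single_le_sum (f := fun k => ‖q k‖) (fun _ _ => norm_nonneg _)
        (Finset.self_mem_range_succ n)
  have hanti : StrictAnti fun n => (1 / 2 : ℝ) ^ n / s n := strictAnti_nat_of_succ_lt fun n =>
    div_lt_div₀ (pow_lt_pow_right_of_lt_one₀ (by norm_num) (by norm_num) n.lt_succ_self)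
      (hmono n) (by positivity) (hpos n)
  refine ⟨_, hanti.injective, .of_norm_bounded summable_geometric_two fun n => ?_⟩
  calc ‖(((1 / 2 : ℝ) ^ n / s n : ℝ) : 𝕜) • q n‖ = (1 / 2) ^ n / s n * ‖q n‖ := by
        rw [norm_smul, RCLike.norm_ofReal, abs_of_pos (div_pos (by positivity) (hpos n))]
    _ ≤ (1 / 2) ^ n / s n * s n :=
        mul_le_mul_of_nonneg_left (hle n) (div_pos (by positivity) (hpos n)).le
    _ = (1 / 2) ^ n := div_mul_cancel₀ _ (hpos n).ne'

end Eigenvalues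

/-- The idempotents of `S`, carrying the natural partial order `e ≤ f ↔ e * f = e ∧ f * e = e`.
This is a type of its own because for commutative `S` the subtype
`{a : S // IsIdempotentElem a}` already carries an order in Mathlib. -/
def Idempotents (S : Type*) [Mul S] : Type _ := {e : S // IsIdempotentElem e}

namespace Idempotents

instance {S : Type*} [Semigroup S] : PartialOrder (Idempotents S) where
  le e f := e.1 * f.1 = e.1 ∧ f.1 * e.1 = e.1
  le_refl e := ⟨e.2, e.2⟩
  le_trans e f g hef hfg :=
    ⟨by rw [← hef.1, mul_assoc, hfg.1], by rw [← hef.2, ← mul_assoc, hfg.2]⟩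
  le_antisymm _ _ hef hfe := Subtype.ext (hef.1.symm.trans hfe.2)

variable {A : Type*} [NonUnitalRing A]

theorem isIdempotentElem_sub {e f : Idempotents A} (hef : e ≤ f) :
    IsIdempotentElem (f.1 - e.1) := by
  simp only [IsIdempotentElem, sub_mul, mul_sub, f.2.eq, e.2.eq, hef.1, hef.2, sub_self, sub_zero]

theorem sub_mul_sub_eq_zero {e f g k : Idempotents A} (hef : e ≤ f) (hfg : f ≤ g) (hgk : g ≤ k) :
    (f.1 - e.1) * (k.1 - g.1) = 0 ∧ (k.1 - g.1) * (f.1 - e.1) = 0 := by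
  have heg := hef.trans hfg
  have hfk := hfg.trans hgk
  have hek := hef.trans hfk
  constructor
  · simp only [sub_mul, mul_sub, hfk.1, hfg.1, hek.1, heg.1, sub_self]
  · simp only [sub_mul, mul_sub, hfk.2, hfg.2, hek.2, heg.2, sub_self]

theorem pairwise_sub_mul_sub_eq_zero {ι : Type*} {e f : ι → Idempotents A} (hef : ∀ i, e i ≤ f i)
    (hsep : Pairwise fun i j => f i ≤ e j ∨ f j ≤ e i) :
    Pairwise fun i j => ((f i).1 - (e i).1) * ((f j).1 - (e j).1) = 0 := fun i j hij =>
  (hsep hij).elim (fun h => (sub_mul_sub_eq_zero (hef i) h (hef j)).1)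
    fun h => (sub_mul_sub_eq_zero (hef j) h (hef i)).2

end Idempotents

section BanachStarAlgebra

variable (𝕜 : Type*) {A : Type*} [RCLike 𝕜] [NonUnitalNormedRing A] [CompleteSpace A]
  [StarRing A] [ContinuousStar A] [NormedSpace 𝕜 A] [IsScalarTower 𝕜 A A] [StarModule 𝕜 A]

theorem exists_isSelfAdjoint_infinite_quasispectrum_of_orthogonal {q : ℕ → A}
    (hproj : ∀ n, IsStarProjection (q n)) (hne : ∀ n, q n ≠ 0)
    (horth : Pairwise fun m n => q m * q n = 0) :
    ∃ a : A, IsSelfAdjoint a ∧ (quasispectrum 𝕜 a).Infinite := by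
  obtain ⟨c, hinj, hsum⟩ := exists_injective_summable_smul 𝕜 q
  refine ⟨∑' n, (c n : 𝕜) • q n, ?_, ?_⟩
  · rw [IsSelfAdjoint, tsum_star]
    simp only [star_smul, RCLike.star_def, RCLike.conj_ofReal, (hproj _).isSelfAdjoint.star_eq]
  · exact Set.infinite_of_injective_forall_mem (RCLike.ofReal_injective.comp hinj) fun n =>
      mem_quasispectrum_of_mul_eq_smul_s10 (hne n)
        (tsum_smul_mul_eq_smul hsum horth (hproj n).isIdempotentElem)

theorem exists_isSelfAdjoint_infinite_quasispectrum_of_separated {e f : ℕ → Idempotents A}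
    (he : ∀ n, IsSelfAdjoint (e n).1) (hf : ∀ n, IsSelfAdjoint (f n).1) (hef : ∀ n, e n < f n)
    (hsep : Pairwise fun m n => f m ≤ e n ∨ f n ≤ e m) :
    ∃ a : A, IsSelfAdjoint a ∧ (quasispectrum 𝕜 a).Infinite :=
  exists_isSelfAdjoint_infinite_quasispectrum_of_orthogonal 𝕜
    (fun n => ⟨Idempotents.isIdempotentElem_sub (hef n).le, (hf n).sub (he n)⟩)
    (fun n => sub_ne_zero.mpr fun h => (hef n).ne' (Subtype.ext h))
    (Idempotents.pairwise_sub_mul_sub_eq_zero (fun n => (hef n).le) hsep)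

theorem exists_isSelfAdjoint_infinite_quasispectrum_of_strictMono_s10 {P : ℕ → Idempotents A}
    (hsa : ∀ n, IsSelfAdjoint (P n).1) (hP : StrictMono P) :
    ∃ a : A, IsSelfAdjoint a ∧ (quasispectrum 𝕜 a).Infinite :=
  exists_isSelfAdjoint_infinite_quasispectrum_of_separated 𝕜 hsa (fun n => hsa (n + 1))
    (fun n => hP n.lt_succ_self)
    fun _ _ hmn => hmn.lt_or_gt.imp (fun h => hP.monotone h) fun h => hP.monotone h

theorem exists_isSelfAdjoint_infinite_quasispectrum_of_strictAnti_s10 {P : ℕ → Idempotents A}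
    (hsa : ∀ n, IsSelfAdjoint (P n).1) (hP : StrictAnti P) :
    ∃ a : A, IsSelfAdjoint a ∧ (quasispectrum 𝕜 a).Infinite :=
  exists_isSelfAdjoint_infinite_quasispectrum_of_separated 𝕜 (fun n => hsa (n + 1)) hsa
    (fun n => hP n.lt_succ_self)
    fun _ _ hmn => hmn.gt_or_lt.imp (fun h => hP.antitone h) fun h => hP.antitone h

end BanachStarAlgebra

theorem no_strictly_monotone_sequence_of_projections_general
    {𝕜 A : Type*} [RCLike 𝕜] [NonUnitalNormedRing A] [CompleteSpace A] [StarRing A]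
    [ContinuousStar A] [NormedSpace 𝕜 A] [IsScalarTower 𝕜 A A] [StarModule 𝕜 A]
    (h : ∀ a : A, IsSelfAdjoint a → (quasispectrum 𝕜 a).Finite) :
    (¬ ∃ P : ℕ → A, (∀ n, IsSelfAdjoint (P n) ∧ P n * P n = P n) ∧
      ∀ n, (P n * P (n + 1) = P n ∧ P (n + 1) * P n = P n) ∧ P n ≠ P (n + 1)) ∧
    (¬ ∃ P : ℕ → A, (∀ n, IsSelfAdjoint (P n) ∧ P n * P n = P n) ∧
      ∀ n, (P (n + 1) * P n = P (n + 1) ∧ P n * P (n + 1) = P (n + 1)) ∧ P n ≠ P (n + 1)) := by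
  constructor
  · rintro ⟨P, hproj, hstep⟩
    let e : ℕ → Idempotents A := fun n => ⟨P n, (hproj n).2⟩
    have he : StrictMono e := strictMono_nat_of_lt_succ fun n =>
      lt_of_le_of_ne (hstep n).1 fun heq => (hstep n).2 (congrArg Subtype.val heq)
    obtain ⟨a, ha, hinf⟩ := exists_isSelfAdjoint_infinite_quasispectrum_of_strictMono_s10 𝕜
      (fun n => (hproj n).1) he
    exact hinf (h a ha)
  · rintro ⟨P, hproj, hstep⟩
    let e : ℕ → Idempotents A := fun n => ⟨P n, (hproj n).2⟩
    have he : StrictAnti e := strictAnti_nat_of_succ_lt fun n =>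
      lt_of_le_of_ne (hstep n).1 fun heq => (hstep n).2 (congrArg Subtype.val heq.symm)
    obtain ⟨a, ha, hinf⟩ := exists_isSelfAdjoint_infinite_quasispectrum_of_strictAnti_s10 𝕜
      (fun n => (hproj n).1) he
    exact hinf (h a ha)

/-- In a C*-algebra in which every self-adjoint element has finite spectrum (in the
unitization), there is no strictly increasing sequence of projections (for the order
`P ≤ Q ↔ PQ = QP = P`), and no strictly decreasing one. -/
theorem no_strictly_monotone_sequence_of_projections
    {A : Type*} [NonUnitalCStarAlgebra A]
    (h : ∀ a : A, IsSelfAdjoint a → (quasispectrum ℂ a).Finite) :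
    (¬ ∃ P : ℕ → A, (∀ n, IsSelfAdjoint (P n) ∧ P n * P n = P n) ∧
      ∀ n, (P n * P (n + 1) = P n ∧ P (n + 1) * P n = P n) ∧ P n ≠ P (n + 1)) ∧
    (¬ ∃ P : ℕ → A, (∀ n, IsSelfAdjoint (P n) ∧ P n * P n = P n) ∧
      ∀ n, (P (n + 1) * P n = P (n + 1) ∧ P n * P (n + 1) = P (n + 1)) ∧ P n ≠ P (n + 1)) :=
  no_strictly_monotone_sequence_of_projections_general h
end

section
/- Let A be a C*-algebra in which the spectrum of every self-adjoint element is finite. Then every nonzero projection P in A can be written as P = P₁ + ⋯ + P_d for some d ∈ ℕ, where P₁, …, P_d are nonzero pairwise orthogonal minimal projections in A. -/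
/-!
If the projections contained an infinite strictly descending chain, the successive differences `Dₙ`
would be nonzero pairwise orthogonal projections, and `∑ cⁿ Dₙ` with `0 < ‖c‖ < 1` and `c`
self-adjoint would be a self-adjoint element having every `cⁿ` as an eigenvalue. So finiteness of
spectra makes the order on projections well-founded, and one can split a minimal projection off `P`
and induct on what is left.
-/

open Function

/-- The projections of `A`, for which `p ≤ q` means `p * q = p`; the minimal projections are then
the atoms. This is a structure, not a subtype, so that it does not inherit an order from `A`. -/
@[ext]
structure StarProjection (A : Type*) [Mul A] [Star A] where
  val : A
  isStarProjection : IsStarProjection val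

namespace StarProjection

section Mul

variable {A : Type*} [Mul A]

lemma mul_self [Star A] (p : StarProjection A) : p.val * p.val = p.val :=
  p.isStarProjection.isIdempotentElem

lemma star_val [Star A] (p : StarProjection A) : star p.val = p.val :=
  p.isStarProjection.isSelfAdjoint

lemma mul_eq_left_iff_mul_eq_right [StarMul A] {p q : StarProjection A} :
    p.val * q.val = p.val ↔ q.val * p.val = p.val := by
  rw [← star_inj, star_mul, p.star_val, q.star_val]

end Mul

section Semigroup

variable {A : Type*} [Semigroup A] [StarMul A]

instance : PartialOrder (StarProjection A) where
  le p q := p.val * q.val = p.val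
  le_refl p := p.mul_self
  le_trans p q r hpq hqr := by
    rw [← hpq, mul_assoc, hqr]
  le_antisymm p q hpq hqp := StarProjection.ext <| by
    rw [← hpq, mul_eq_left_iff_mul_eq_right.1 hqp]

lemma le_def {p q : StarProjection A} : p ≤ q ↔ p.val * q.val = p.val := Iff.rfl

lemma le_iff_mul_eq_right {p q : StarProjection A} : p ≤ q ↔ q.val * p.val = p.val :=
  mul_eq_left_iff_mul_eq_right

end Semigroup

section NonUnitalSemiring

variable {A : Type*} [NonUnitalSemiring A] [StarRing A] {p p' q : StarProjection A}

instance : OrderBot (StarProjection A) where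
  bot := ⟨0, .zero A⟩
  bot_le p := zero_mul p.val

lemma val_bot : (⊥ : StarProjection A).val = 0 := rfl

lemma val_eq_zero : p.val = 0 ↔ p = ⊥ := by
  rw [StarProjection.ext_iff, val_bot]

/-- Orthogonality of projections. By self-adjointness `q * p = 0` holds as well, see
`StarProjection.Orthogonal.symm`. -/
def Orthogonal (p q : StarProjection A) : Prop :=
  p.val * q.val = 0

lemma Orthogonal.symm (h : Orthogonal p q) : Orthogonal q p := by
  rw [Orthogonal, ← p.star_val, ← q.star_val, ← star_mul, h, star_zero]

instance : Std.Symm (Orthogonal (A := A)) := ⟨fun _ _ => Orthogonal.symm⟩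

lemma Orthogonal.mono_left (h : Orthogonal p q) (hp : p' ≤ p) : Orthogonal p' q := by
  rw [Orthogonal, ← le_def.1 hp, mul_assoc, h, mul_zero]

lemma le_of_sum_eq {ι : Type*} [Fintype ι] {q : ι → StarProjection A}
    (hq : Pairwise (Orthogonal on q)) (hsum : ∑ i, (q i).val = p.val) (i : ι) : q i ≤ p := by
  rw [le_def, ← hsum, Finset.mul_sum, Fintype.sum_eq_single i fun j hj => hq hj.symm, mul_self]

end NonUnitalSemiring

section NonUnitalRing

variable {A : Type*} [NonUnitalRing A] [StarRing A]

/-- The relative complement `q - p` of `p` in `q`. Without `p ≤ q` it need not be a projection, so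
the inequality is an argument. -/
def sub (q p : StarProjection A) (h : p ≤ q) : StarProjection A :=
  ⟨q.val - p.val, p.isStarProjection.sub_of_mul_eq_left q.isStarProjection h⟩

variable {p q : StarProjection A}

lemma val_sub (h : p ≤ q) : (q.sub p h).val = q.val - p.val := rfl

lemma sub_orthogonal (h : p ≤ q) : Orthogonal (q.sub p h) p := by
  rw [Orthogonal, val_sub, sub_mul, le_iff_mul_eq_right.1 h, mul_self, sub_self]

lemma sub_le (h : p ≤ q) : q.sub p h ≤ q := by
  rw [le_def, val_sub, sub_mul, le_def.1 h, mul_self]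

lemma sub_lt (h : p ≤ q) (hp : p ≠ ⊥) : q.sub p h < q :=
  (sub_le h).lt_of_ne fun hqp => hp <| val_eq_zero.1 <| sub_eq_self.1 <|
    (val_sub h).symm.trans (congrArg val hqp)

lemma sub_ne_bot (h : p < q) : q.sub p h.le ≠ ⊥ := fun hbot =>
  h.ne' <| StarProjection.ext <| sub_eq_zero.1 <| val_eq_zero.2 hbot

lemma pairwise_orthogonal_sub_succ {f : ℕ → StarProjection A} (hf : Antitone f) :
    Pairwise (Orthogonal on fun n => (f n).sub (f (n + 1)) (hf n.le_succ)) := by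
  refine (Std.Symm.pairwise_on _).2 fun m n hmn => ?_
  have hle : (f n).sub (f (n + 1)) (hf n.le_succ) ≤ f (m + 1) :=
    (sub_le _).trans (hf hmn)
  exact ((sub_orthogonal _).symm.mono_left hle).symm

lemma wellFoundedLT_of_forall_pairwise_orthogonal
    (h : ∀ q : ℕ → StarProjection A, Pairwise (Orthogonal on q) → ∃ n, q n = ⊥) :
    WellFoundedLT (StarProjection A) := by
  refine ⟨RelEmbedding.wellFounded_iff_isEmpty.2 ⟨fun f => ?_⟩⟩
  have hf : StrictAnti f := fun _ _ hmn => f.map_rel_iff.2 hmn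
  obtain ⟨n, hn⟩ := h _ (pairwise_orthogonal_sub_succ hf.antitone)
  exact sub_ne_bot (hf n.lt_succ_self) hn

theorem exists_isAtom_sum_eq [WellFoundedLT (StarProjection A)] (p : StarProjection A) :
    ∃ (d : ℕ) (q : Fin d → StarProjection A), (∀ i, IsAtom (q i)) ∧
      Pairwise (Orthogonal on q) ∧ ∑ i, (q i).val = p.val := by
  induction p using WellFoundedLT.induction with
  | ind p ih =>
    obtain rfl | ⟨a, ha, hap⟩ := eq_bot_or_exists_atom_le p
    · exact ⟨0, Fin.elim0, Fin.rec0, Subsingleton.pairwise, rfl⟩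
    · obtain ⟨d, q, hq, horth, hsum⟩ := ih (p.sub a hap) (sub_lt hap ha.ne_bot)
      have hqa (i : Fin d) : Orthogonal (q i) a :=
        (sub_orthogonal hap).mono_left (le_of_sum_eq horth hsum i)
      refine ⟨d + 1, Fin.cons a q, Fin.cases ha hq, ?_, ?_⟩
      · exact pairwise_fin_succ_iff.2 ⟨hqa, fun i => (hqa i).symm, horth⟩
      · simp only [Fin.sum_univ_succ, Fin.cons_zero, Fin.cons_succ, hsum, val_sub,
          add_sub_cancel]

end NonUnitalRing

end StarProjection

lemma mem_quasispectrum_of_mul_eq_smul_s13 {R A : Type*} [CommRing R] [NonUnitalRing A] [Module R A]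
    [IsScalarTower R A A] [SMulCommClass R A A] {a x : A} {c : R} (hx : x ≠ 0)
    (hax : a * x = c • x) : c ∈ quasispectrum R a := by
  rw [Unitization.quasispectrum_eq_spectrum_inr, spectrum.mem_iff]
  intro hu
  have hmul : (algebraMap R (Unitization R A) c - (a : Unitization R A)) *
      (x : Unitization R A) = 0 := by
    rw [sub_mul, ← Algebra.smul_def, ← Unitization.inr_mul, hax, Unitization.inr_smul, sub_self]
  exact hx <| Unitization.inr_injective <| hu.mul_right_eq_zero.1 hmul

lemma exists_isSelfAdjoint_norm_lt_one (𝕜 : Type*) [NontriviallyNormedField 𝕜] [StarRing 𝕜]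
    [NormedStarGroup 𝕜] : ∃ c : 𝕜, IsSelfAdjoint c ∧ 0 < ‖c‖ ∧ ‖c‖ < 1 := by
  obtain ⟨d, hd0, hd1⟩ := NormedField.exists_norm_lt_one 𝕜
  refine ⟨star d * d, .star_mul_self d, ?_⟩
  rw [norm_mul, norm_star]
  exact ⟨mul_pos hd0 hd0, mul_lt_one_of_nonneg_of_lt_one_left hd0.le hd1 hd1.le⟩

namespace StarProjection

section CStarRing

variable {𝕜 A : Type*} [NonUnitalNormedRing A] [StarRing A] [CStarRing A] [CompleteSpace A]

lemma summable_pow_smul [NormedField 𝕜] [NormedSpace 𝕜 A] {c : 𝕜} (hc : ‖c‖ < 1)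
    (q : ℕ → StarProjection A) : Summable fun n => c ^ n • (q n).val := by
  refine .of_norm_bounded (summable_geometric_of_lt_one (norm_nonneg c) hc) fun n => ?_
  rw [norm_smul, norm_pow]
  exact mul_le_of_le_one_right (by positivity) (q n).isStarProjection.norm_le

lemma tsum_pow_smul_mul [NormedField 𝕜] [NormedSpace 𝕜 A] [IsScalarTower 𝕜 A A] {c : 𝕜}
    (hc : ‖c‖ < 1) {q : ℕ → StarProjection A} (hq : Pairwise (Orthogonal on q)) (m : ℕ) :
    (∑' n, c ^ n • (q n).val) * (q m).val = c ^ m • (q m).val := by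
  rw [← (summable_pow_smul hc q).tsum_mul_right, tsum_eq_single m, smul_mul_assoc, mul_self]
  intro n hn
  rw [smul_mul_assoc, hq hn, smul_zero]

variable (𝕜) [NontriviallyNormedField 𝕜] [StarRing 𝕜] [NormedStarGroup 𝕜] [NormedSpace 𝕜 A]
  [IsScalarTower 𝕜 A A] [SMulCommClass 𝕜 A A] [StarModule 𝕜 A]

theorem exists_isSelfAdjoint_infinite_quasispectrum {q : ℕ → StarProjection A}
    (hq : Pairwise (Orthogonal on q)) (hq0 : ∀ n, q n ≠ ⊥) :
    ∃ a : A, IsSelfAdjoint a ∧ (quasispectrum 𝕜 a).Infinite := by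
  obtain ⟨c, hc, hc0, hc1⟩ := exists_isSelfAdjoint_norm_lt_one 𝕜
  have hinj : Injective fun n : ℕ => c ^ n := by
    refine Injective.of_comp (f := norm) ?_
    simpa only [comp_def, norm_pow] using pow_right_injective₀ hc0 hc1.ne
  refine ⟨∑' n, c ^ n • (q n).val, ?_, Set.infinite_of_injective_forall_mem hinj fun m => ?_⟩
  · rw [IsSelfAdjoint, tsum_star]
    exact tsum_congr fun n => (hc.pow n).smul (q n).isStarProjection.isSelfAdjoint
  · exact mem_quasispectrum_of_mul_eq_smul_s13 (val_eq_zero.not.2 (hq0 m)) (tsum_pow_smul_mul hc1 hq m)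

theorem wellFoundedLT_of_finite_quasispectrum
    (h : ∀ a : A, IsSelfAdjoint a → (quasispectrum 𝕜 a).Finite) :
    WellFoundedLT (StarProjection A) := by
  refine wellFoundedLT_of_forall_pairwise_orthogonal fun q hq => ?_
  by_contra! hq0
  obtain ⟨a, ha, hinf⟩ := exists_isSelfAdjoint_infinite_quasispectrum 𝕜 hq hq0
  exact hinf (h a ha)

end CStarRing

end StarProjection

theorem projection_eq_sum_of_minimal_projections_general
    {𝕜 A : Type*} [NontriviallyNormedField 𝕜] [StarRing 𝕜] [NormedStarGroup 𝕜]
    [NonUnitalNormedRing A] [StarRing A] [CStarRing A] [CompleteSpace A] [NormedSpace 𝕜 A]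
    [IsScalarTower 𝕜 A A] [SMulCommClass 𝕜 A A] [StarModule 𝕜 A]
    (h : ∀ a : A, IsSelfAdjoint a → (quasispectrum 𝕜 a).Finite)
    (P : A) (hP : IsSelfAdjoint P ∧ P * P = P) :
    ∃ (d : ℕ) (Q : Fin d → A),
      (∀ j, IsSelfAdjoint (Q j) ∧ Q j * Q j = Q j ∧ Q j ≠ 0) ∧
      (∀ i j, i ≠ j → Q i * Q j = 0 ∧ Q j * Q i = 0) ∧
      (∀ j, ∀ R : A, (IsSelfAdjoint R ∧ R * R = R) → R ≠ 0 →
        (R * Q j = R ∧ Q j * R = R) → R = Q j) ∧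
      P = ∑ j, Q j := by
  have := StarProjection.wellFoundedLT_of_finite_quasispectrum 𝕜 h
  obtain ⟨d, q, hq, horth, hsum⟩ := StarProjection.exists_isAtom_sum_eq ⟨P, hP.2, hP.1⟩
  refine ⟨d, fun j => (q j).val, fun j => ?_, fun i j hij => ?_, fun j R hR hR0 hRq => ?_,
    hsum.symm⟩
  · exact ⟨(q j).star_val, (q j).mul_self, StarProjection.val_eq_zero.not.2 (hq j).ne_bot⟩
  · exact ⟨horth hij, horth hij.symm⟩
  · let r : StarProjection A := ⟨R, hR.2, hR.1⟩
    have hr : r ≠ ⊥ := StarProjection.val_eq_zero.not.1 hR0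
    exact congrArg StarProjection.val (((hq j).le_iff_eq hr).1 hRq.1)

/-- In a C*-algebra in which every self-adjoint element has finite spectrum (in the
unitization), every nonzero projection is a finite sum of nonzero pairwise orthogonal
minimal projections (minimality being with respect to the order `P ≤ Q ↔ PQ = QP = P`). -/
theorem projection_eq_sum_of_minimal_projections
    {A : Type*} [NonUnitalCStarAlgebra A]
    (h : ∀ a : A, IsSelfAdjoint a → (quasispectrum ℂ a).Finite)
    (P : A) (hP : IsSelfAdjoint P ∧ P * P = P) (hP0 : P ≠ 0) :
    ∃ (d : ℕ) (Q : Fin d → A),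
      (∀ j, IsSelfAdjoint (Q j) ∧ Q j * Q j = Q j ∧ Q j ≠ 0) ∧
      (∀ i j, i ≠ j → Q i * Q j = 0 ∧ Q j * Q i = 0) ∧
      -- each `Q j` is minimal
      (∀ j, ∀ R : A, (IsSelfAdjoint R ∧ R * R = R) → R ≠ 0 →
        (R * Q j = R ∧ Q j * R = R) → R = Q j) ∧
      P = ∑ j, Q j :=
  projection_eq_sum_of_minimal_projections_general h P hP
end

section
/- Let A be a C*-algebra in which the spectrum of every self-adjoint element is finite, and let P be a minimal projection in A. Then for every a ∈ A there exists a scalar c ∈ ℂ such that P·a·P = c·P; equivalently, the complex vector space P·A·P = {P a P : a ∈ A} is one-dimensional, spanned by P. -/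
/-!
Compress a self-adjoint element by `P` to get a self-adjoint `b = P * a * P`. If `b ≠ 0`, its
spectrum, being finite, has a nonzero isolated point `c`, and the functional calculus turns the
indicator function of `{c}` into a nonzero projection `e` with `b * e = c • e`. As `c ≠ 0`, this
forces `e ≤ P`, so `e = P` by minimality and `b = b * P = c • P`. The general case follows by
splitting `a` into real and imaginary parts.
-/

open Filter Topology

lemma continuousOn_indicator_singleton_of_not_accPt {X Y : Type*} [TopologicalSpace X] [T1Space X]
    [TopologicalSpace Y] [Zero Y] {s : Set X} {c : X} (hc : ¬ AccPt c (𝓟 s)) (g : X → Y) :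
    ContinuousOn (({c} : Set X).indicator g) s := by
  intro x _
  rcases eq_or_ne x c with rfl | hx
  · refine continuousWithinAt_const.congr_of_eventuallyEq (f := fun _ ↦ g x) ?_ (by simp)
    have hiso : ∀ᶠ y in 𝓝[s] x, y = x := by
      rw [eventually_nhdsWithin_iff]
      simpa only [accPt_iff_frequently, not_frequently, not_and_not_right, not_and', not_not]
        using hc
    filter_upwards [hiso] with y hy
    simp [hy]
  · refine continuousWithinAt_const.congr_of_eventuallyEq (f := fun _ ↦ 0) ?_ (by simp [hx])
    filter_upwards [eventually_nhdsWithin_of_eventually_nhds (eventually_ne_nhds hx)] with y hy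
    simp [hy]

section SpectralProjection

variable {R A : Type*} {p : A → Prop} [CommSemiring R] [Nontrivial R] [StarRing R] [MetricSpace R]
  [IsTopologicalSemiring R] [ContinuousStar R] [NonUnitalRing A] [StarRing A] [TopologicalSpace A]
  [Module R A] [IsScalarTower R A A] [SMulCommClass R A A]
  [NonUnitalContinuousFunctionalCalculus R A p]

/-- The spectral projection of `a` at a nonzero isolated point `c` of its quasispectrum. By the
conventions of `cfcₙ` it is `0` when `c = 0`, when the indicator function of `{c}` is not continuous
on the quasispectrum, and when `a` does not satisfy the predicate of the functional calculus. -/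
noncomputable def spectralProjection (a : A) (c : R) : A :=
  cfcₙ (({c} : Set R).indicator 1) a

lemma isStarProjection_spectralProjection (a : A) (c : R) :
    IsStarProjection (spectralProjection a c) := by
  refine cfcₙ_cases IsStarProjection a _ (.zero A) fun _ _ _ ↦ .map ⟨?_, ?_⟩ _
  all_goals
    ext x
    by_cases hx : (x : R) = c <;> simp [hx]

lemma mul_spectralProjection (a : A) (c : R) :
    a * spectralProjection a c = c • spectralProjection a c := by
  refine cfcₙ_cases (fun e ↦ a * e = c • e) a _ (by simp) fun _ _ ha ↦ ?_
  nth_rw 1 [← cfcₙHom_id (R := R) ha]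
  rw [← map_mul, ← map_smul]
  congr 1
  ext x
  by_cases hx : (x : R) = c <;> simp [hx]

lemma spectralProjection_mul (a : A) (c : R) :
    spectralProjection a c * a = c • spectralProjection a c := by
  by_cases ha : p a
  · have hcomm : Commute (spectralProjection a c) a := by
      simpa only [spectralProjection, cfcₙ_id R a] using
        cfcₙ_commute_cfcₙ (({c} : Set R).indicator 1) id a
    rw [hcomm.eq, mul_spectralProjection]
  · simp [spectralProjection, cfcₙ_apply_of_not_predicate a ha]

lemma spectralProjection_ne_zero {a : A} (ha : p a) {c : R} (hc : c ∈ quasispectrum R a)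
    (hc0 : c ≠ 0) (hiso : ¬ AccPt c (𝓟 (quasispectrum R a))) : spectralProjection a c ≠ 0 := by
  intro he
  have hEq : (quasispectrum R a).EqOn (({c} : Set R).indicator 1) 0 :=
    eqOn_of_cfcₙ_eq_cfcₙ (he.trans (cfcₙ_zero R a).symm) ha
      (continuousOn_indicator_singleton_of_not_accPt hiso 1) (by simp [hc0.symm])
      continuousOn_const rfl
  simpa using hEq hc

lemma exists_mem_quasispectrum_ne_zero {a : A} (ha : p a) (ha0 : a ≠ 0) :
    ∃ c ∈ quasispectrum R a, c ≠ 0 := by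
  by_contra! hzero
  exact ha0 (CFC.eq_zero_of_quasispectrum_eq_zero a hzero)

end SpectralProjection

/-- A nonzero projection `P` is minimal if no other nonzero projection `Q` satisfies `Q ≤ P`. The
order is spelled out as `Q * P = Q ∧ P * Q = Q`, so that no order structure on `A` is required. -/
structure IsMinimalProjection_s15 {A : Type*} [Mul A] [Zero A] [Star A] (P : A) : Prop where
  isStarProjection : IsStarProjection P
  ne_zero : P ≠ 0
  eq_of_le : ∀ Q : A, IsStarProjection Q → Q ≠ 0 → Q * P = Q ∧ P * Q = Q → Q = P

namespace IsMinimalProjection_s15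

variable {R A : Type*} {p : A → Prop} [Semifield R] [StarRing R] [MetricSpace R]
  [IsTopologicalSemiring R] [ContinuousStar R] [NonUnitalRing A] [StarRing A] [TopologicalSpace A]
  [Module R A] [IsScalarTower R A A] [SMulCommClass R A A]
  [NonUnitalContinuousFunctionalCalculus R A p]

lemma eq_smul_of_not_accPt {P b : A} (hP : IsMinimalProjection_s15 P) (hb : p b) (hPb : P * b = b)
    (hbP : b * P = b) {c : R} (hc : c ∈ quasispectrum R b) (hc0 : c ≠ 0)
    (hiso : ¬ AccPt c (𝓟 (quasispectrum R b))) : b = c • P := by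
  set e := spectralProjection b c
  have hbe : b * e = c • e := mul_spectralProjection b c
  have heb : e * b = c • e := spectralProjection_mul b c
  have hPe : P * e = e := by
    rw [← inv_smul_smul₀ hc0 e, ← hbe, mul_smul_comm, ← mul_assoc, hPb]
  have heP : e * P = e := by
    rw [← inv_smul_smul₀ hc0 e, ← heb, smul_mul_assoc, mul_assoc, hbP]
  have he : e = P := hP.eq_of_le e (isStarProjection_spectralProjection b c)
    (spectralProjection_ne_zero hb hc hc0 hiso) ⟨heP, hPe⟩
  rw [← hbP, ← he, hbe]

lemma exists_eq_smul_of_finite_quasispectrum {P b : A} (hP : IsMinimalProjection_s15 P) (hb : p b)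
    (hPb : P * b = b) (hbP : b * P = b) (hfin : (quasispectrum R b).Finite) :
    ∃ c : R, b = c • P := by
  rcases eq_or_ne b 0 with rfl | hb0
  · exact ⟨0, (zero_smul R P).symm⟩
  · obtain ⟨c, hc, hc0⟩ := exists_mem_quasispectrum_ne_zero (R := R) hb hb0
    exact ⟨c, hP.eq_smul_of_not_accPt hb hPb hbP hc hc0 fun hacc ↦ Set.Infinite.of_accPt hacc hfin⟩

end IsMinimalProjection_s15

lemma exists_mul_mul_eq_smul_of_forall_isSelfAdjoint {A : Type*} [NonUnitalRing A] [StarRing A]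
    [Module ℂ A] [IsScalarTower ℂ A A] [SMulCommClass ℂ A A] [StarModule ℂ A] {x : A}
    (h : ∀ a : A, IsSelfAdjoint a → ∃ c : ℂ, x * a * x = c • x) (a : A) :
    ∃ c : ℂ, x * a * x = c • x := by
  obtain ⟨r, hr⟩ := h _ (realPart a).2
  obtain ⟨s, hs⟩ := h _ (imaginaryPart a).2
  refine ⟨r + Complex.I * s, ?_⟩
  rw [← realPart_add_I_smul_imaginaryPart a, mul_add, add_mul, hr, mul_smul_comm,
    smul_mul_assoc, hs, smul_smul, add_smul]

lemma span_corner_eq_span_singleton {K A : Type*} [Semiring K] [NonUnitalSemiring A] [Module K A]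
    {e : A} (he : IsIdempotentElem e) (h : ∀ a : A, ∃ c : K, e * a * e = c • e) :
    Submodule.span K {x : A | ∃ a : A, x = e * a * e} = K ∙ e := by
  refine le_antisymm (Submodule.span_le.2 ?_) (Submodule.span_mono ?_)
  · rintro _ ⟨a, rfl⟩
    obtain ⟨c, hc⟩ := h a
    exact Submodule.mem_span_singleton.2 ⟨c, hc.symm⟩
  · exact Set.singleton_subset_iff.2 ⟨e, by rw [he.eq, he.eq]⟩

lemma rank_span_singleton_eq_one {K V : Type*} [DivisionRing K] [AddCommGroup V] [Module K V]
    {v : V} (hv : v ≠ 0) : Module.rank K (K ∙ v) = 1 :=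
  (rank_submodule_eq_one_iff _).2 ⟨v, Submodule.mem_span_singleton_self v, hv, le_rfl⟩

theorem minimal_projection_corner_one_dimensional_general
    {A : Type*} [NonUnitalRing A] [StarRing A] [TopologicalSpace A] [Module ℂ A]
    [IsScalarTower ℂ A A] [SMulCommClass ℂ A A] [StarModule ℂ A]
    [NonUnitalContinuousFunctionalCalculus ℝ A IsSelfAdjoint] {P : A} (hP : IsMinimalProjection_s15 P)
    (h : ∀ a : A, IsSelfAdjoint a → (quasispectrum ℝ (P * a * P)).Finite) :
    (∀ a : A, ∃ c : ℂ, P * a * P = c • P) ∧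
    Module.rank ℂ ↥(Submodule.span ℂ {x : A | ∃ a : A, x = P * a * P}) = 1 := by
  have hPP : P * P = P := hP.isStarProjection.isIdempotentElem
  have corner_selfAdjoint (a : A) (ha : IsSelfAdjoint a) : ∃ c : ℂ, P * a * P = c • P := by
    have hb : IsSelfAdjoint (P * a * P) := ha.conjugate_self hP.isStarProjection.isSelfAdjoint
    obtain ⟨r, hr⟩ := hP.exists_eq_smul_of_finite_quasispectrum hb
      (by simp only [← mul_assoc, hPP]) (by simp only [mul_assoc, hPP]) (h a ha)
    exact ⟨r, hr.trans (Complex.coe_smul r P).symm⟩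
  have corner := exists_mul_mul_eq_smul_of_forall_isSelfAdjoint corner_selfAdjoint
  refine ⟨corner, ?_⟩
  rw [span_corner_eq_span_singleton hPP corner, rank_span_singleton_eq_one hP.ne_zero]

/-- In a C*-algebra in which every self-adjoint element has finite spectrum (in the
unitization), if `P` is a minimal projection then every `P * a * P` is a scalar multiple
of `P`; equivalently, the subspace `P·A·P` is one-dimensional, spanned by `P`. -/
theorem minimal_projection_corner_one_dimensional
    {A : Type*} [NonUnitalCStarAlgebra A]
    (h : ∀ a : A, IsSelfAdjoint a → (quasispectrum ℂ a).Finite)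
    (P : A) (hP : IsSelfAdjoint P ∧ P * P = P) (hP0 : P ≠ 0)
    (hmin : ∀ Q : A, (IsSelfAdjoint Q ∧ Q * Q = Q) → Q ≠ 0 →
      (Q * P = Q ∧ P * Q = Q) → Q = P) :
    (∀ a : A, ∃ c : ℂ, P * a * P = c • P) ∧
    Module.rank ℂ ↥(Submodule.span ℂ {x : A | ∃ a : A, x = P * a * P}) = 1 := by
  refine minimal_projection_corner_one_dimensional_general
    ⟨⟨hP.2, hP.1⟩, hP0, fun Q hQ ↦ hmin Q ⟨hQ.2, hQ.1⟩⟩ fun a ha ↦ ?_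
  rw [← quasispectrum.preimage_algebraMap ℂ]
  exact (h _ (ha.conjugate_self hP.1)).preimage Complex.ofReal_injective.injOn
end

section
/- Let A be a C*-algebra in which the spectrum of every self-adjoint element is finite, and let P and Q be minimal projections in A. Then the complex vector space Q·A·P = {Q a P : a ∈ A} has dimension 0 or 1. -/
/-!
The corner `P A P` of a minimal projection `P` is `ℂ P`: if `a` is a normal element of the corner
and `U` is a relatively clopen subset of its spectrum with `0 ∉ U` and `U ≠ ∅`, then `χ_U(a)` is a
nonzero projection below `P`, hence equal to `P`, and `a = a χ_U(a)` shows that the spectrum has no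
nonzero point outside `U`. When clopen sets separate points, the spectrum has at most one nonzero
point `l`, and `a = l P`.

Now let `x ∈ Q A P` be nonzero. Then `star x * x = c P` with `c ≠ 0`, so `c⁻¹ x (star x)` is a
nonzero projection below `Q`, hence equal to `Q`. Therefore every `y ∈ Q A P` satisfies
`y = Q y = c⁻¹ x (star x * y)`, and `star x * y ∈ P A P = ℂ P` makes this a multiple of `x`.
-/

open Set

theorem exists_continuousOn_indicator_one {X M : Type*} [TopologicalSpace X] [T2Space X]
    [TopologicalSpace M] [Zero M] [One M] {s O : Set X} {x : X} (hs : IsCompact s)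
    (hsd : IsTotallyDisconnected s) (hO : IsOpen O) (hxs : x ∈ s) (hxO : x ∈ O) :
    ∃ U ⊆ O, x ∈ U ∧ ContinuousOn (U.indicator (1 : X → M)) s := by
  have := isCompact_iff_compactSpace.mp hs
  have := totallyDisconnectedSpace_subtype_iff.mpr hsd
  obtain ⟨V, hV, hxV, hVO⟩ := compact_exists_isClopen_in_isOpen
    (hO.preimage (continuous_subtype_val (p := (· ∈ s)))) (x := ⟨x, hxs⟩) hxO
  refine ⟨Subtype.val '' V, image_subset_iff.mpr hVO, ⟨_, hxV, rfl⟩, ?_⟩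
  rw [continuousOn_iff_continuous_domRestrict]
  convert hV.continuous_indicator (continuous_one (M := M) (X := s)) using 1
  ext y
  by_cases hy : y ∈ V <;> simp [hy]

section FunctionalCalculus

variable {𝕜 A : Type*} {p : A → Prop} [RCLike 𝕜] [NonUnitalRing A] [StarRing A] [Module 𝕜 A]
  [IsScalarTower 𝕜 A A] [SMulCommClass 𝕜 A A] [TopologicalSpace A]
  [NonUnitalContinuousFunctionalCalculus 𝕜 A p]

theorem mul_cfcₙ_eq_self [IsTopologicalRing A] [T2Space A] {a e : A} (ha : e * a = a)
    (hstar : e * star a = star a) (f : 𝕜 → 𝕜) : e * cfcₙ f a = cfcₙ f a := by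
  refine cfcₙ_cases (fun x ↦ e * x = x) a f (mul_zero e) fun hf hf0 hpa ↦ ?_
  generalize (⟨⟨_, hf.domRestrict⟩, hf0⟩ : ContinuousMapZero (quasispectrum 𝕜 a) 𝕜) = g
  open scoped NonUnitalContinuousFunctionalCalculus in
  induction g using ContinuousMapZero.induction_on_of_compact with
  | zero => rw [map_zero, mul_zero]
  | smul r g hg => rw [map_smul, mul_smul_comm, hg]
  | id => rwa [cfcₙHom_id hpa]
  | star_id => rwa [map_star, cfcₙHom_id]
  | add g₁ g₂ h₁ h₂ => rw [map_add, mul_add, h₁, h₂]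
  | mul g₁ g₂ h₁ _ => rw [map_mul, ← mul_assoc, h₁]
  | frequently g hg =>
    have hclosed : IsClosed {x : A | e * x = x} := isClosed_eq (by fun_prop) (by fun_prop)
    exact hclosed.mem_of_frequently_of_tendsto hg ((cfcₙHom_continuous hpa).tendsto _)

theorem isStarProjection_cfcₙ_indicator_one (a : A) (U : Set 𝕜) :
    IsStarProjection (cfcₙ (U.indicator 1) a) := by
  refine cfcₙ_cases IsStarProjection a _ (.zero A) fun hU h0 ha ↦ IsStarProjection.map ⟨?_, ?_⟩ _
  all_goals
    ext z
    by_cases hz : (z : 𝕜) ∈ U <;> simp [hz]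

end FunctionalCalculus

/-- A minimal projection: a minimal nonzero element among the star projections, where `R ≤ P` is
encoded by `R * P = R` and `P * R = R`, so that no order structure on `A` is needed. -/
structure IsMinimalProjection_s16 {A : Type*} [NonUnitalSemiring A] [Star A] (P : A) : Prop where
  isStarProjection : IsStarProjection P
  ne_zero : P ≠ 0
  eq_of_le : ∀ R : A, IsStarProjection R → R ≠ 0 → R * P = R ∧ P * R = R → R = P

namespace IsMinimalProjection_s16

variable {A : Type*} [NonUnitalCStarAlgebra A] {P Q : A}

theorem cfcₙ_indicator_one_eq (hP : IsMinimalProjection_s16 P) {a : A} [IsStarNormal a]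
    (haP : a * P = a) (hPa : P * a = a) {U : Set ℂ} {l : ℂ} (hl : l ∈ quasispectrum ℂ a)
    (hlU : l ∈ U) (h0 : 0 ∉ U) (hU : ContinuousOn (U.indicator (1 : ℂ → ℂ)) (quasispectrum ℂ a)) :
    cfcₙ (U.indicator 1) a = P := by
  have hstarP : star a * P = star a := by
    simpa [hP.isStarProjection.isSelfAdjoint.star_eq] using congrArg star hPa
  have hPstar : P * star a = star a := by
    simpa [hP.isStarProjection.isSelfAdjoint.star_eq] using congrArg star haP
  have hmul : P * cfcₙ (U.indicator 1) a = cfcₙ (U.indicator 1) a :=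
    mul_cfcₙ_eq_self hPa hPstar (U.indicator (1 : ℂ → ℂ))
  have hcomm : Commute (cfcₙ (U.indicator (1 : ℂ → ℂ)) a) P :=
    Commute.cfcₙ (haP.trans hPa.symm) (hstarP.trans hPstar.symm) (U.indicator 1)
  refine hP.eq_of_le _ (isStarProjection_cfcₙ_indicator_one a U) (fun hzero ↦ ?_)
    ⟨hcomm.eq.trans hmul, hmul⟩
  have heq : (quasispectrum ℂ a).EqOn (U.indicator 1) 0 :=
    eqOn_of_cfcₙ_eq_cfcₙ (hzero.trans (cfcₙ_zero ℂ a).symm) ‹_› hU (indicator_of_notMem h0 _)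
  simpa [hlU] using heq hl

theorem mem_of_mem_quasispectrum_of_ne_zero (hP : IsMinimalProjection_s16 P) {a : A} [IsStarNormal a]
    (haP : a * P = a) (hPa : P * a = a) {U : Set ℂ} {l m : ℂ} (hl : l ∈ quasispectrum ℂ a)
    (hlU : l ∈ U) (h0 : 0 ∉ U) (hU : ContinuousOn (U.indicator (1 : ℂ → ℂ)) (quasispectrum ℂ a))
    (hm : m ∈ quasispectrum ℂ a) (hm0 : m ≠ 0) : m ∈ U := by
  have hU0 : U.indicator (1 : ℂ → ℂ) 0 = 0 := indicator_of_notMem h0 _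
  have hmul : cfcₙ (fun z : ℂ ↦ z * U.indicator 1 z) a = cfcₙ (fun z : ℂ ↦ z) a := by
    rw [cfcₙ_mul (fun z ↦ z) (U.indicator 1) a continuousOn_id rfl hU hU0,
      hP.cfcₙ_indicator_one_eq haP hPa hl hlU h0 hU, cfcₙ_id' ℂ a, haP]
  have heq : (quasispectrum ℂ a).EqOn (fun z ↦ z * U.indicator 1 z) (fun z ↦ z) :=
    eqOn_of_cfcₙ_eq_cfcₙ hmul ‹_› (continuousOn_id.mul hU) (zero_mul _) continuousOn_id rfl
  by_contra hmU
  simpa [hmU, hm0.symm] using heq hm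

theorem eq_of_mem_quasispectrum (hP : IsMinimalProjection_s16 P) {a : A} [IsStarNormal a]
    (haP : a * P = a) (hPa : P * a = a) (hσ : IsTotallyDisconnected (quasispectrum ℂ a))
    {l m : ℂ} (hl : l ∈ quasispectrum ℂ a) (hl0 : l ≠ 0) (hm : m ∈ quasispectrum ℂ a)
    (hm0 : m ≠ 0) : m = l := by
  by_contra hml
  obtain ⟨U, hUO, hlU, hU⟩ := exists_continuousOn_indicator_one (M := ℂ)
    (isCompact_iff_compactSpace.mpr inferInstance) hσ
    (toFinite {0, m}).isClosed.isOpen_compl hl (by simp [hl0, Ne.symm hml])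
  have hmU : m ∈ U :=
    hP.mem_of_mem_quasispectrum_of_ne_zero haP hPa hl hlU (fun h0 ↦ hUO h0 (by simp)) hU hm hm0
  exact hUO hmU (by simp)

theorem exists_eq_smul_of_isStarNormal (hP : IsMinimalProjection_s16 P) {a : A} [IsStarNormal a]
    (haP : a * P = a) (hPa : P * a = a) (hσ : IsTotallyDisconnected (quasispectrum ℂ a)) :
    ∃ c : ℂ, a = c • P := by
  by_cases h : ∃ l ∈ quasispectrum ℂ a, l ≠ 0
  · obtain ⟨l, hl, hl0⟩ := h
    obtain ⟨U, hU0, hlU, hU⟩ := exists_continuousOn_indicator_one (M := ℂ)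
      (isCompact_iff_compactSpace.mpr inferInstance) hσ isOpen_compl_singleton hl hl0
    have h0 : (0 : ℂ) ∉ U := fun h0 ↦ hU0 h0 rfl
    have heq : (quasispectrum ℂ a).EqOn (fun z ↦ z) (fun z ↦ l • U.indicator 1 z) := by
      intro z hz
      by_cases hz0 : z = 0
      · simp [hz0, h0]
      · simp [hP.eq_of_mem_quasispectrum haP hPa hσ hl hl0 hz hz0, hlU]
    refine ⟨l, ?_⟩
    calc a = cfcₙ (fun z ↦ z) a := (cfcₙ_id' ℂ a).symm
      _ = cfcₙ (fun z ↦ l • U.indicator 1 z) a := cfcₙ_congr heq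
      _ = l • P := by
        rw [cfcₙ_smul l (U.indicator 1) a hU (indicator_of_notMem h0 _),
          hP.cfcₙ_indicator_one_eq haP hPa hl hlU h0 hU]
  · push Not at h
    exact ⟨0, by rw [zero_smul, CFC.eq_zero_of_quasispectrum_eq_zero (R := ℂ) a h]⟩

theorem exists_mul_mul_eq_smul (hP : IsMinimalProjection_s16 P)
    (h : ∀ a : A, IsSelfAdjoint a → IsTotallyDisconnected (quasispectrum ℂ (P * a * P))) (b : A) :
    ∃ c : ℂ, P * b * P = c • P := by
  have hPP : P * P = P := hP.isStarProjection.isIdempotentElem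
  have key (a : A) (ha : IsSelfAdjoint a) : ∃ c : ℂ, P * a * P = c • P := by
    have hPaP : IsSelfAdjoint (P * a * P) := by
      simpa only [hP.isStarProjection.isSelfAdjoint.star_eq] using ha.conjugate P
    have := hPaP.isStarNormal
    exact hP.exists_eq_smul_of_isStarNormal (by rw [mul_assoc, hPP])
      (by rw [← mul_assoc, ← mul_assoc, hPP]) (h a ha)
  obtain ⟨c, hc⟩ := key (realPart b) (realPart b).2
  obtain ⟨d, hd⟩ := key (imaginaryPart b) (imaginaryPart b).2
  refine ⟨c + Complex.I * d, ?_⟩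
  rw [← realPart_add_I_smul_imaginaryPart b, mul_add, add_mul, mul_smul_comm, smul_mul_assoc, hc,
    hd, smul_smul, ← add_smul]

theorem eq_inv_smul_mul_star (hQ : IsMinimalProjection_s16 Q) {x : A} {c : ℂ} (hx : x ≠ 0)
    (hQx : Q * x = x) (hc : x * star x * x = c • x) : Q = c⁻¹ • (x * star x) := by
  have hc0 : c ≠ 0 := by
    rintro rfl
    have : star (star x * x) * (star x * x) = 0 := by
      rw [zero_smul] at hc
      rw [star_mul, star_star, mul_assoc, ← mul_assoc x, hc, mul_zero]
    exact hx (by simpa only [CStarRing.star_mul_self_eq_zero_iff] using this)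
  have hxQ : star x * Q = star x := by
    simpa [hQ.isStarProjection.isSelfAdjoint.star_eq] using congrArg star hQx
  have hidem : IsIdempotentElem (c⁻¹ • (x * star x)) := by
    rw [IsIdempotentElem, smul_mul_smul_comm, ← mul_assoc (x * star x), hc, smul_mul_assoc,
      smul_smul, mul_assoc, inv_mul_cancel₀ hc0, mul_one]
  -- A normal idempotent is self-adjoint, so `c` need not be shown to be real.
  have hproj : IsStarProjection (c⁻¹ • (x * star x)) := by
    have := (IsSelfAdjoint.mul_star_self x).isStarNormal
    exact isStarProjection_iff_isIdempotentElem_and_isStarNormal.mpr ⟨hidem, inferInstance⟩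
  have hne : c⁻¹ • (x * star x) ≠ 0 :=
    smul_ne_zero (inv_ne_zero hc0) (mt (CStarRing.mul_star_self_eq_zero_iff x).mp hx)
  refine (hQ.eq_of_le _ hproj hne ⟨?_, ?_⟩).symm
  · rw [smul_mul_assoc, mul_assoc, hxQ]
  · rw [mul_smul_comm, ← mul_assoc, hQx]

theorem rank_span_corner_le_one (hQ : IsMinimalProjection_s16 Q) (hP : IsStarProjection P)
    (h : ∀ b : A, ∃ c : ℂ, P * b * P = c • P) :
    Module.rank ℂ ↥(Submodule.span ℂ {x : A | ∃ a : A, x = Q * a * P}) ≤ 1 := by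
  rw [rank_submodule_le_one_iff']
  by_cases hne : ∃ a : A, Q * a * P ≠ 0
  · obtain ⟨a, hx0⟩ := hne
    set x := Q * a * P with hx
    have hQQ : Q * Q = Q := hQ.isStarProjection.isIdempotentElem
    have hPP : P * P = P := hP.isIdempotentElem
    have hQx : Q * x = x := by rw [hx, ← mul_assoc, ← mul_assoc, hQQ]
    have hxP : x * P = x := by rw [hx, mul_assoc, hPP]
    have hsmul (b : A) : ∃ c : ℂ, x * star x * (Q * b * P) = c • x := by
      obtain ⟨c, hc⟩ := h (star a * Q * (Q * b))
      refine ⟨c, ?_⟩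
      calc x * star x * (Q * b * P) = x * (P * (star a * Q * (Q * b)) * P) := by
            simp only [hx, star_mul, hP.isSelfAdjoint.star_eq,
              hQ.isStarProjection.isSelfAdjoint.star_eq, mul_assoc]
        _ = c • x := by rw [hc, mul_smul_comm, hxP]
    obtain ⟨c, hc⟩ := hsmul a
    have hQeq : Q = c⁻¹ • (x * star x) := hQ.eq_inv_smul_mul_star hx0 hQx hc
    refine ⟨x, Submodule.span_le.mpr ?_⟩
    rintro _ ⟨b, rfl⟩
    obtain ⟨d, hd⟩ := hsmul b
    refine Submodule.mem_span_singleton.mpr ⟨c⁻¹ * d, ?_⟩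
    calc (c⁻¹ * d) • x = c⁻¹ • (x * star x) * (Q * b * P) := by
          rw [smul_mul_assoc, hd, smul_smul]
      _ = Q * b * P := by rw [← hQeq, ← mul_assoc, ← mul_assoc, hQQ]
  · push Not at hne
    refine ⟨0, Submodule.span_le.mpr ?_⟩
    rintro _ ⟨a, rfl⟩
    simp [hne a]

end IsMinimalProjection_s16

theorem corner_between_minimal_projections_rank_le_one_general {A : Type*}
    [NonUnitalCStarAlgebra A] {P Q : A} (hP : IsMinimalProjection_s16 P) (hQ : IsMinimalProjection_s16 Q)
    (h : ∀ a : A, IsSelfAdjoint a → IsTotallyDisconnected (quasispectrum ℂ (P * a * P))) :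
    Module.rank ℂ ↥(Submodule.span ℂ {x : A | ∃ a : A, x = Q * a * P}) ≤ 1 :=
  hQ.rank_span_corner_le_one hP.isStarProjection (hP.exists_mul_mul_eq_smul h)

/-- In a C*-algebra in which every self-adjoint element has finite spectrum (in the
unitization), if `P` and `Q` are minimal projections then the subspace
`Q·A·P = {Q a P : a ∈ A}` has dimension `0` or `1`. -/
theorem corner_between_minimal_projections_rank_le_one
    {A : Type*} [NonUnitalCStarAlgebra A]
    (h : ∀ a : A, IsSelfAdjoint a → (quasispectrum ℂ a).Finite)
    (P Q : A)
    (hP : IsSelfAdjoint P ∧ P * P = P) (hP0 : P ≠ 0)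
    (hPmin : ∀ R : A, (IsSelfAdjoint R ∧ R * R = R) → R ≠ 0 →
      (R * P = R ∧ P * R = R) → R = P)
    (hQ : IsSelfAdjoint Q ∧ Q * Q = Q) (hQ0 : Q ≠ 0)
    (hQmin : ∀ R : A, (IsSelfAdjoint R ∧ R * R = R) → R ≠ 0 →
      (R * Q = R ∧ Q * R = R) → R = Q) :
    Module.rank ℂ ↥(Submodule.span ℂ {x : A | ∃ a : A, x = Q * a * P}) ≤ 1 := by
  refine corner_between_minimal_projections_rank_le_one_general
    ⟨⟨hP.2, hP.1⟩, hP0, fun R hR ↦ hPmin R ⟨hR.isSelfAdjoint, hR.isIdempotentElem⟩⟩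
    ⟨⟨hQ.2, hQ.1⟩, hQ0, fun R hR ↦ hQmin R ⟨hR.isSelfAdjoint, hR.isIdempotentElem⟩⟩
    fun a ha ↦ (h _ ?_).countable.isTotallyDisconnected
  simpa only [hP.1.star_eq] using ha.conjugate P
end

section
/- Let A be a unital C*-algebra in which the spectrum of every self-adjoint element is finite, and suppose the unit decomposes as 1 = P₁ + ⋯ + P_d, where P₁, …, P_d are pairwise orthogonal minimal projections in A. Then the complex dimension of A is at most d². -/
/-!
Let `p` be a minimal projection and let `a` be self-adjoint with `a = p a = a p`. A clopen piece
of the spectrum of `a` that avoids `0` gives, through the continuous functional calculus, a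
projection below `p`, hence equal to `p`; so two nonzero spectral values can never be separated by
a clopen set. If the spectrum is totally disconnected, this leaves a single nonzero value `c`, so
`c⁻¹ a` is a projection below `p` and `a = c p`. Thus `p A p = ℂ p`.

If `x ∈ p A q` is nonzero, then `x y x ≠ 0` for some `y` (for instance `y = x*`), so `q y x` is a
nonzero multiple of `q`, and any `z ∈ p A q` is proportional to `z y x = (z y p) x ∈ ℂ x`. Hence
`p A q` is at most a line, and `A` is the sum of the `d²` spaces `Pᵢ A Pⱼ`.
-/

section Peirce

variable {𝕜 A : Type*} [Field 𝕜] [Ring A] [Algebra 𝕜 A]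

theorem rank_le_sum_rank_mulLeftRight {ι : Type*} [Fintype ι] {e : ι → A} (he : ∑ i, e i = 1) :
    Module.rank 𝕜 A ≤ ∑ i, ∑ j, (LinearMap.mulLeftRight 𝕜 (e i, e j)).rank := by
  have hid : ∑ i, ∑ j, LinearMap.mulLeftRight 𝕜 (e i, e j) = LinearMap.id := by
    ext a
    simp [← Finset.mul_sum, ← Finset.sum_mul, he]
  calc Module.rank 𝕜 A = (LinearMap.id : A →ₗ[𝕜] A).rank := by
        rw [LinearMap.rank, LinearMap.range_id, rank_top]
    _ ≤ ∑ i, (∑ j, LinearMap.mulLeftRight 𝕜 (e i, e j)).rank :=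
        hid ▸ LinearMap.rank_finsetSum_le _ _
    _ ≤ ∑ i, ∑ j, (LinearMap.mulLeftRight 𝕜 (e i, e j)).rank :=
        Finset.sum_le_sum fun i _ => LinearMap.rank_finsetSum_le _ _

theorem rank_mulLeftRight_le_one_of_semiprime (hA : ∀ x : A, (∀ y, x * y * x = 0) → x = 0)
    {p q : A} (hp : ∀ a, ∃ c : 𝕜, p * a * p = c • p)
    (hq : ∀ a, ∃ c : 𝕜, q * a * q = c • q) :
    (LinearMap.mulLeftRight 𝕜 (p, q)).rank ≤ 1 := by
  rw [LinearMap.rank, rank_submodule_le_one_iff']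
  by_cases hpq : ∀ b, p * b * q = 0
  · refine ⟨0, ?_⟩
    rintro _ ⟨b, rfl⟩
    simp [hpq b]
  push Not at hpq
  obtain ⟨b, hb⟩ := hpq
  obtain ⟨y, hy⟩ : ∃ y, p * b * q * y * (p * b * q) ≠ 0 := by
    by_contra! h
    exact hb (hA _ h)
  obtain ⟨c, hc⟩ := hq (y * p * b)
  have hmul (a : A) : p * a * q * y * (p * b * q) = c • (p * a * q) := by
    rw [← mul_smul_comm, ← hc]
    noncomm_ring
  have hc0 : c ≠ 0 := by
    rintro rfl
    exact hy (by rw [hmul, zero_smul])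
  refine ⟨p * b * q, ?_⟩
  rintro _ ⟨a, rfl⟩
  obtain ⟨c', hc'⟩ := hp (a * q * y)
  have hprop : c • (p * a * q) = c' • (p * b * q) := by
    rw [← hmul, ← smul_mul_assoc, ← smul_mul_assoc, ← hc']
    noncomm_ring
  refine Submodule.mem_span_singleton.2 ⟨c⁻¹ * c', ?_⟩
  rw [mul_smul, ← hprop, inv_smul_smul₀ hc0, LinearMap.mulLeftRight_apply]

end Peirce

theorem eq_zero_of_forall_mul_mul_self_eq_zero {A : Type*} [NonUnitalNormedRing A] [StarRing A]
    [CStarRing A] {x : A} (hx : ∀ y, x * y * x = 0) : x = 0 := by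
  rw [← CStarRing.star_mul_self_eq_zero_iff, ← CStarRing.star_mul_self_eq_zero_iff, star_mul,
    star_star, mul_assoc, ← mul_assoc x, hx, mul_zero]

section ContinuousMap

variable {X R : Type*} [TopologicalSpace X]

theorem isStarProjection_of_forall_eq_zero_or_eq_one [TopologicalSpace R] [Semiring R]
    [StarRing R] [IsTopologicalSemiring R] [ContinuousStar R] {f : C(X, R)}
    (hf : ∀ x, f x = 0 ∨ f x = 1) : IsStarProjection f where
  isIdempotentElem := by
    ext x
    rcases hf x with hx | hx <;> simp [hx]
  isSelfAdjoint := by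
    ext x
    rcases hf x with hx | hx <;> simp [hx]

theorem dvd_of_isIdempotentElem_of_forall_eq_zero [NormedField R] [CompleteSpace R] {f g : C(X, R)}
    (hf : IsIdempotentElem f) (h : ∀ x, g x = 0 → f x = 0) : g ∣ f := by
  -- `g` is invertible where `f = 1`, so replacing it by `1` elsewhere yields a unit.
  have hunit : IsUnit (g * f + (1 - f)) := by
    refine (ContinuousMap.isUnit_iff_forall_ne_zero _).2 fun x => ?_
    have hfx : f x = 0 ∨ f x = 1 := IsIdempotentElem.iff_eq_zero_or_one.1 congr($hf x)
    rcases hfx with hx | hx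
    · simp [hx]
    · simpa [hx] using fun hg => one_ne_zero (hx.symm.trans (h x hg))
  have hmul : (g * f + (1 - f)) * f = g * f := by
    linear_combination (g - 1) * hf.eq
  exact hunit.dvd_mul_left.1 (Dvd.intro f hmul.symm)

end ContinuousMap

/-- A minimal projection: a nonzero projection above no other nonzero projection. The relation
`q ≤ p` between projections is written out as `q * p = q ∧ p * q = q`, so no order on the algebra
is needed. -/
structure IsMinimalProjection_s17 {A : Type*} [Mul A] [Zero A] [Star A] (p : A) : Prop
    extends IsStarProjection p where
  ne_zero : p ≠ 0
  eq_of_mul_eq : ∀ q : A, IsStarProjection q → q ≠ 0 → q * p = q ∧ p * q = q → q = p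

namespace IsMinimalProjection_s17

section Spectrum

variable {𝕜 A : Type*} {pred : A → Prop} [RCLike 𝕜] [Ring A] [StarRing A] [TopologicalSpace A]
  [Algebra 𝕜 A] [ContinuousFunctionalCalculus 𝕜 A pred] {p a : A}

theorem cfcHom_eq (hp : IsMinimalProjection_s17 p) (ha : pred a) (hap : a * p = a) (hpa : p * a = a)
    {f : C(spectrum 𝕜 a, 𝕜)} (hf : IsStarProjection f) (hf0 : f ≠ 0)
    (hdvd : (ContinuousMap.id 𝕜).restrict (spectrum 𝕜 a) ∣ f) : cfcHom ha f = p := by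
  refine hp.eq_of_mul_eq _ (hf.map _) ((map_ne_zero_iff _ (cfcHom_injective ha)).2 hf0) ?_
  obtain ⟨g, rfl⟩ := hdvd
  constructor
  · rw [mul_comm, map_mul, cfcHom_id, mul_assoc, hap]
  · rw [map_mul, cfcHom_id, ← mul_assoc, hpa]

theorem mem_of_isClopen_of_ne_zero (hp : IsMinimalProjection_s17 p) (ha : pred a) (hap : a * p = a)
    (hpa : p * a = a) {U : Set (spectrum 𝕜 a)} (hU : IsClopen U) (hne : U.Nonempty)
    (hU0 : ∀ z ∈ U, (z : 𝕜) ≠ 0) {x : spectrum 𝕜 a} (hx : (x : 𝕜) ≠ 0) : x ∈ U := by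
  set f : C(spectrum 𝕜 a, 𝕜) := (LocallyConstant.charFn 𝕜 hU).toContinuousMap
  have hf_one (z) : f z = 1 ↔ z ∈ U := LocallyConstant.charFn_eq_one 𝕜 z hU
  have hf_zero (z) : f z = 0 ↔ z ∉ U := LocallyConstant.charFn_eq_zero 𝕜 z hU
  have hf : IsStarProjection f := isStarProjection_of_forall_eq_zero_or_eq_one fun z => by
    rw [hf_one, hf_zero]
    exact (em _).symm
  have hf0 : f ≠ 0 := by
    obtain ⟨z, hz⟩ := hne
    exact fun h => (hf_zero z).1 congr($h z) hz
  have hfp : cfcHom ha f = p := hp.cfcHom_eq ha hap hpa hf hf0 <|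
    dvd_of_isIdempotentElem_of_forall_eq_zero hf.isIdempotentElem fun z hz =>
      (hf_zero z).2 fun hzU => hU0 z hzU hz
  have hid : (ContinuousMap.id 𝕜).restrict (spectrum 𝕜 a) * f =
      (ContinuousMap.id 𝕜).restrict (spectrum 𝕜 a) :=
    cfcHom_injective ha <| by rw [map_mul, cfcHom_id, hfp, hap]
  exact (hf_one x).1 (mul_left_cancel₀ hx (by simpa using congr($hid x)))

theorem spectrum_diff_zero_subsingleton (hp : IsMinimalProjection_s17 p) (ha : pred a)
    (hap : a * p = a) (hpa : p * a = a) (hdisc : IsTotallyDisconnected (spectrum 𝕜 a)) :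
    (spectrum 𝕜 a \ {0}).Subsingleton := by
  have := ContinuousFunctionalCalculus.compactSpace_spectrum (R := 𝕜) a
  have := totallyDisconnectedSpace_subtype_iff.2 hdisc
  rintro x ⟨hx, hx0 : x ≠ 0⟩ y ⟨hy, hy0 : y ≠ 0⟩
  by_contra hxy
  have hne : (⟨x, hx⟩ : spectrum 𝕜 a) ≠ ⟨y, hy⟩ := Subtype.coe_ne_coe.1 hxy
  obtain ⟨U, hU, hxU, hyU⟩ := exists_isClopen_of_totally_separated hne
  by_cases hU0 : ∀ z ∈ U, (z : 𝕜) ≠ 0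
  · exact hyU (hp.mem_of_isClopen_of_ne_zero ha hap hpa hU ⟨_, hxU⟩ hU0 hy0)
  · push Not at hU0
    obtain ⟨w, hwU, hw⟩ := hU0
    have hUc0 : ∀ z ∈ Uᶜ, (z : 𝕜) ≠ 0 := fun z hzU hz =>
      hzU (Subtype.ext (hz.trans hw.symm) ▸ hwU)
    exact hp.mem_of_isClopen_of_ne_zero ha hap hpa hU.compl ⟨_, hyU⟩ hUc0 hx0 hxU

theorem exists_eq_smul (hp : IsMinimalProjection_s17 p) (ha : pred a) (hap : a * p = a)
    (hpa : p * a = a) (hdisc : IsTotallyDisconnected (spectrum 𝕜 a)) : ∃ c : 𝕜, a = c • p := by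
  set X : C(spectrum 𝕜 a, 𝕜) := (ContinuousMap.id 𝕜).restrict (spectrum 𝕜 a)
  have hX : cfcHom ha X = a := cfcHom_id ha
  by_cases hX0 : X = 0
  · exact ⟨0, by rw [← hX, hX0, map_zero, zero_smul]⟩
  obtain ⟨⟨c, hc⟩, hc0 : c ≠ 0⟩ := DFunLike.ne_iff.1 hX0
  have hproj : IsStarProjection (c⁻¹ • X) :=
    isStarProjection_of_forall_eq_zero_or_eq_one fun z => or_iff_not_imp_left.2 fun hz => by
      have hz0 : (z : 𝕜) ≠ 0 := right_ne_zero_of_mul hz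
      have hzc : (z : 𝕜) = c :=
        hp.spectrum_diff_zero_subsingleton ha hap hpa hdisc ⟨z.2, hz0⟩ ⟨hc, hc0⟩
      simp [X, hzc, hc0]
  have hcp : cfcHom ha (c⁻¹ • X) = p := hp.cfcHom_eq ha hap hpa hproj
    (smul_ne_zero (inv_ne_zero hc0) hX0) (dvd_smul_of_dvd c⁻¹ dvd_rfl)
  exact ⟨c, by rw [← hcp, map_smul, hX, smul_inv_smul₀ hc0]⟩

end Spectrum

theorem exists_mul_mul_eq_smul_s17 {A : Type*} [Ring A] [StarRing A] [TopologicalSpace A]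
    [Algebra ℂ A] [StarModule ℂ A] [ContinuousFunctionalCalculus ℂ A IsStarNormal] {p : A}
    (hp : IsMinimalProjection_s17 p)
    (hdisc : ∀ a : A, IsSelfAdjoint a → IsTotallyDisconnected (spectrum ℂ a)) (a : A) :
    ∃ c : ℂ, p * a * p = c • p := by
  have hself {b : A} (hb : IsSelfAdjoint b) : ∃ c : ℂ, p * b * p = c • p := by
    have hb' : IsSelfAdjoint (p * b * p) := by
      simpa only [hp.isSelfAdjoint.star_eq] using hb.conjugate p
    refine hp.exists_eq_smul hb'.isStarNormal ?_ ?_ (hdisc _ hb')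
    · rw [mul_assoc, hp.isIdempotentElem.eq]
    · rw [← mul_assoc, ← mul_assoc, hp.isIdempotentElem.eq]
  obtain ⟨c, hc⟩ := hself (realPart a).2
  obtain ⟨c', hc'⟩ := hself (imaginaryPart a).2
  refine ⟨c + Complex.I * c', ?_⟩
  conv_lhs => rw [← realPart_add_I_smul_imaginaryPart a]
  rw [mul_add, add_mul, hc, mul_smul_comm, smul_mul_assoc, hc', add_smul, mul_smul]

end IsMinimalProjection_s17

theorem rank_le_sq_of_unit_eq_sum_minimal_projections_general {A ι : Type*} [NormedRing A]
    [StarRing A] [CStarRing A] [NormedAlgebra ℂ A] [StarModule ℂ A]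
    [ContinuousFunctionalCalculus ℂ A IsStarNormal] [Fintype ι] {P : ι → A}
    (hdisc : ∀ a : A, IsSelfAdjoint a → IsTotallyDisconnected (spectrum ℂ a))
    (hP : ∀ i, IsMinimalProjection_s17 (P i)) (hsum : ∑ i, P i = 1) :
    Module.rank ℂ A ≤ (Fintype.card ι ^ 2 : ℕ) := by
  have hcorner (i j) : (LinearMap.mulLeftRight ℂ (P i, P j)).rank ≤ 1 :=
    rank_mulLeftRight_le_one_of_semiprime (fun _ => eq_zero_of_forall_mul_mul_self_eq_zero)
      ((hP i).exists_mul_mul_eq_smul_s17 hdisc) ((hP j).exists_mul_mul_eq_smul_s17 hdisc)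
  calc Module.rank ℂ A ≤ ∑ i, ∑ j, (LinearMap.mulLeftRight ℂ (P i, P j)).rank :=
        rank_le_sum_rank_mulLeftRight hsum
    _ ≤ ∑ _ : ι, ∑ _ : ι, 1 := Finset.sum_le_sum fun i _ => Finset.sum_le_sum fun j _ => hcorner i j
    _ = (Fintype.card ι ^ 2 : ℕ) := by simp [sq]

/-- If `A` is a unital C*-algebra in which every self-adjoint element has finite spectrum
and the unit is a sum `1 = P₁ + ⋯ + P_d` of pairwise orthogonal minimal projections, then
`dim_ℂ A ≤ d²`. -/
theorem rank_le_sq_of_unit_eq_sum_minimal_projections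
    {A : Type*} [CStarAlgebra A]
    (h : ∀ a : A, IsSelfAdjoint a → (spectrum ℂ a).Finite)
    (d : ℕ) (P : Fin d → A)
    (hproj : ∀ j, IsSelfAdjoint (P j) ∧ P j * P j = P j)
    (horth : ∀ i j, i ≠ j → P i * P j = 0 ∧ P j * P i = 0)
    (hmin : ∀ j, P j ≠ 0 ∧ ∀ R : A, (IsSelfAdjoint R ∧ R * R = R) → R ≠ 0 →
      (R * P j = R ∧ P j * R = R) → R = P j)
    (hsum : (1 : A) = ∑ j, P j) :
    Module.rank ℂ A ≤ (d ^ 2 : ℕ) := by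
  have hP (j) : IsMinimalProjection_s17 (P j) :=
    ⟨⟨(hproj j).2, (hproj j).1⟩, (hmin j).1, fun q hq =>
      (hmin j).2 q ⟨hq.isSelfAdjoint, hq.isIdempotentElem⟩⟩
  simpa only [Fintype.card_fin] using rank_le_sq_of_unit_eq_sum_minimal_projections_general
    (fun a ha => (h a ha).countable.isTotallyDisconnected) hP hsum.symm
end
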